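/- arXiv:math/0501306 — 3 statements merged into one kernel-verified Lean document; each statement's English description precedes it below -/
import Mathlib

section
/- Let (p, q) and (r, s) be pairs of positive integers with 2p ≤ q and 2r ≤ s, and suppose p/q = r/s. Write this common value in lowest terms with denominator k; then k divides both q and s. If s/k = q/k or s/k <_s q/k in the Sharkovsky ordering, then (p, q) forces (r, s): every continuous map f : I → I of a closed interval I having a cycle with over-rotation pair (p, q) also has a cycle with over-rotation pair (r, s). -/
open Function

/-- The number of sign changes of `f y - y` as `y` runs along the cyclic sequence
`x, f x, …, f^[q-1] x, f^[q] x (= x)`. -/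
noncomputable def overCount (f : ℝ → ℝ) (x : ℝ) (q : ℕ) : ℕ :=
  ((Finset.range q).filter fun i =>
    (f (f^[i] x) - f^[i] x) * (f (f^[i + 1] x) - f^[i + 1] x) < 0).card

/-- `f` has a cycle in `I` with over-rotation pair `(p, q)`. -/
def HasOverPair (f : ℝ → ℝ) (I : Set ℝ) (p q : ℕ) : Prop :=
  ∃ x ∈ I, minimalPeriod f x = q ∧ overCount f x q = 2 * p

/-- The over-rotation pair `(p, q)` forces the over-rotation pair `(r, s)`: every
continuous map of a closed interval into itself having a cycle with over-rotation pair
`(p, q)` also has a cycle with over-rotation pair `(r, s)`. -/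
def OrpForces (p q r s : ℕ) : Prop :=
  ∀ a b : ℝ, a ≤ b → ∀ f : ℝ → ℝ, ContinuousOn f (Set.Icc a b) →
    Set.MapsTo f (Set.Icc a b) (Set.Icc a b) →
    HasOverPair f (Set.Icc a b) p q → HasOverPair f (Set.Icc a b) r s

/-- The odd part of a natural number: `n = 2^k * oddPart n` with `oddPart n` odd (for `n ≠ 0`). -/
def oddPart (n : ℕ) : ℕ := n / 2 ^ (n.factorization 2)

/-- The Sharkovsky ordering `a <ₛ b`. -/
def SharkLt (a b : ℕ) : Prop :=
  (oddPart a = 1 ∧ oddPart b = 1 ∧ a < b) ∨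
  (oddPart a = 1 ∧ oddPart b ≠ 1) ∨
  (oddPart a ≠ 1 ∧ oddPart b ≠ 1 ∧
    (b.factorization 2 < a.factorization 2 ∨
      (a.factorization 2 = b.factorization 2 ∧ oddPart b < oddPart a)))

section OrpHelpers

open Set


theorem chain_point (f : ℝ → ℝ) (K : ℕ → Set ℝ) (l : ℕ)
    (h : ∀ i < l, K (i + 1) ⊆ f '' K i) (y : ℝ) (hy : y ∈ K l) :
    ∃ x ∈ K 0, (∀ i ≤ l, f^[i] x ∈ K i) ∧ f^[l] x = y := by
  induction l generalizing y with
  | zero => exact ⟨y, hy, by intro i hi; obtain rfl : i = 0 := by omega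
                             simpa using hy, rfl⟩
  | succ l ih =>
    obtain ⟨y', hy', hfy⟩ := h l (by omega) hy
    obtain ⟨x, hx, hi, hl⟩ := ih (fun i hi => h i (by omega)) y' hy'
    refine ⟨x, hx, ?_, ?_⟩
    · intro i hil
      rcases Nat.lt_or_ge l i with h1 | h1
      · obtain rfl : i = l + 1 := by omega
        rw [iterate_succ_apply', hl, hfy]; exact hy
      · exact hi i h1
    · rw [iterate_succ_apply', hl, hfy]

theorem sub_aux (f : ℝ → ℝ) (x y s' t' : ℝ) (hxy : x ≤ y) (hf : ContinuousOn f (Icc x y))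
    (hx : f x = s') (hy : f y = t') (hst : s' ≤ t') :
    ∃ s t, s ≤ t ∧ Icc s t ⊆ Icc x y ∧ MapsTo f (Icc s t) (Icc s' t') ∧ f s = s' ∧ f t = t' := by
  have hc1 : IsCompact (Icc x y ∩ f ⁻¹' {t'}) :=
    isCompact_Icc.of_isClosed_subset
      (hf.preimage_isClosed_of_isClosed isClosed_Icc isClosed_singleton) inter_subset_left
  obtain ⟨t, ⟨⟨htx, hty⟩, hft⟩, htl⟩ := hc1.exists_isLeast ⟨y, ⟨hxy, le_refl _⟩, hy⟩
  have hf2 : ContinuousOn f (Icc x t) := hf.mono (Icc_subset_Icc le_rfl hty)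
  have hc2 : IsCompact (Icc x t ∩ f ⁻¹' {s'}) :=
    isCompact_Icc.of_isClosed_subset
      (hf2.preimage_isClosed_of_isClosed isClosed_Icc isClosed_singleton) inter_subset_left
  obtain ⟨s, ⟨⟨hsx, hst1⟩, hfs⟩, hsl⟩ := hc2.exists_isGreatest ⟨x, ⟨le_refl _, htx⟩, hx⟩
  have hft' : f t = t' := hft
  have hfs' : f s = s' := hfs
  refine ⟨s, t, hst1, Icc_subset_Icc hsx hty, ?_, hfs, hft⟩
  rintro z ⟨hz1, hz2⟩
  constructor
  · by_contra hlt
    push Not at hlt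
    obtain ⟨w, ⟨hw1, hw2⟩, hw⟩ := intermediate_value_Icc hz2
      (hf2.mono (Icc_subset_Icc (hsx.trans hz1) le_rfl)) (show s' ∈ Icc (f z) (f t) from
        ⟨hlt.le, by rw [hft']; exact hst⟩)
    have : w ≤ s := hsl ⟨⟨hsx.trans (hz1.trans hw1), hw2⟩, hw⟩
    have : z = s := le_antisymm (hw1.trans this) hz1
    rw [this] at hlt; linarith
  · by_contra hlt
    push Not at hlt
    obtain ⟨w, ⟨hw1, hw2⟩, hw⟩ := intermediate_value_Icc hz1
      (hf2.mono (Icc_subset_Icc hsx hz2)) (show t' ∈ Icc (f s) (f z) from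
        ⟨by rw [hfs']; exact hst, hlt.le⟩)
    have : t ≤ w := htl ⟨⟨hsx.trans hw1, hw2.trans (hz2.trans hty)⟩, hw⟩
    have : z = t := le_antisymm hz2 (this.trans hw2)
    rw [this] at hlt; linarith

theorem sub_interval (f : ℝ → ℝ) (a b s' t' : ℝ) (hf : ContinuousOn f (Icc a b))
    (hst : s' ≤ t') (hsub : Icc s' t' ⊆ f '' Icc a b) :
    ∃ s t, s ≤ t ∧ Icc s t ⊆ Icc a b ∧ MapsTo f (Icc s t) (Icc s' t') ∧
      ((f s = s' ∧ f t = t') ∨ (f s = t' ∧ f t = s')) := by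
  obtain ⟨x, hx, hfx⟩ := hsub (left_mem_Icc.2 hst)
  obtain ⟨y, hy, hfy⟩ := hsub (right_mem_Icc.2 hst)
  rcases le_total x y with h | h
  · have hs : Icc x y ⊆ Icc a b := Icc_subset_Icc hx.1 hy.2
    obtain ⟨s, t, h1, h2, h3, h4, h5⟩ := sub_aux f x y s' t' h (hf.mono hs) hfx hfy hst
    exact ⟨s, t, h1, h2.trans hs, h3, Or.inl ⟨h4, h5⟩⟩
  · have hs : Icc y x ⊆ Icc a b := Icc_subset_Icc hy.1 hx.2
    obtain ⟨s, t, h1, h2, h3, h4, h5⟩ := sub_aux (fun z => - f z) y x (-t') (-s') h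
      (hf.mono hs).neg (by simp [hfy]) (by simp [hfx]) (by linarith)
    refine ⟨s, t, h1, h2.trans hs, ?_, Or.inr ⟨by simpa using h4, by simpa using h5⟩⟩
    intro z hz
    obtain ⟨h6, h7⟩ := h3 hz
    simp only at h6 h7
    exact ⟨by linarith, by linarith⟩

theorem loop_aux (f : ℝ → ℝ) (l : ℕ) (α β : ℕ → ℝ) (hab : ∀ i, α i ≤ β i)
    (hc : ∀ i < l, ContinuousOn f (Icc (α i) (β i)))
    (hs : ∀ i < l, Icc (α (i+1)) (β (i+1)) ⊆ f '' Icc (α i) (β i)) :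
    ∃ s t, s ≤ t ∧ Icc s t ⊆ Icc (α 0) (β 0) ∧ (∀ x ∈ Icc s t, ∀ i ≤ l, f^[i] x ∈ Icc (α i) (β i)) ∧
      ContinuousOn f^[l] (Icc s t) ∧
      ((f^[l] s = α l ∧ f^[l] t = β l) ∨ (f^[l] s = β l ∧ f^[l] t = α l)) := by
  induction l generalizing α β with
  | zero =>
    refine ⟨α 0, β 0, hab 0, subset_rfl, ?_, continuousOn_id, Or.inl ⟨rfl, rfl⟩⟩
    intro x hx i hi
    obtain rfl : i = 0 := by omega
    exact hx
  | succ l ih =>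
    obtain ⟨s', t', h1, h2, h3, h4, h5⟩ := ih (fun i => α (i+1)) (fun i => β (i+1))
      (fun i => hab _) (fun i hi => hc _ (by omega)) (fun i hi => hs _ (by omega))
    obtain ⟨s, t, g1, g2, g3, g4⟩ := sub_interval f (α 0) (β 0) s' t' (hc 0 (by omega)) h1
      (h2.trans (hs 0 (by omega)))
    refine ⟨s, t, g1, g2, ?_, ?_, ?_⟩
    · intro x hx i hi
      cases i with
      | zero => exact g2 hx
      | succ i => rw [iterate_succ_apply]; exact h3 (f x) (g3 hx) i (by omega)
    · rw [iterate_succ]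
      exact h4.comp ((hc 0 (by omega)).mono g2) g3
    · rw [iterate_succ_apply, iterate_succ_apply]
      rcases g4 with ⟨e1, e2⟩ | ⟨e1, e2⟩ <;> rw [e1, e2] <;> tauto

theorem loop_lemma (f : ℝ → ℝ) (l : ℕ) (α β : ℕ → ℝ)
    (hc : ∀ i < l, ContinuousOn f (uIcc (α i) (β i)))
    (hs : ∀ i < l, uIcc (α (i+1)) (β (i+1)) ⊆ f '' uIcc (α i) (β i))
    (hl : uIcc (α 0) (β 0) ⊆ uIcc (α l) (β l)) :
    ∃ y, (∀ i ≤ l, f^[i] y ∈ uIcc (α i) (β i)) ∧ f^[l] y = y := by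
  obtain ⟨s, t, h1, h2, h3, h4, h5⟩ := loop_aux f l (fun i => min (α i) (β i))
    (fun i => max (α i) (β i)) (fun i => min_le_max) hc hs
  have hsl : s ∈ Icc (min (α l) (β l)) (max (α l) (β l)) := hl (h2 (left_mem_Icc.2 h1))
  have htl : t ∈ Icc (min (α l) (β l)) (max (α l) (β l)) := hl (h2 (right_mem_Icc.2 h1))
  have key : ∃ y ∈ Icc s t, f^[l] y - y = 0 := by
    have hco : ContinuousOn (fun y => f^[l] y - y) (uIcc s t) := by
      rw [uIcc_of_le h1]; exact h4.sub continuousOn_id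
    have := intermediate_value_uIcc hco
    have h0 : (0:ℝ) ∈ uIcc (f^[l] s - s) (f^[l] t - t) := by
      rw [mem_uIcc]
      rcases h5 with ⟨e1, e2⟩ | ⟨e1, e2⟩ <;> rw [e1, e2]
      · left; constructor <;> linarith [hsl.1, htl.2]
      · right; constructor <;> linarith [hsl.2, htl.1]
    obtain ⟨y, hy, hy0⟩ := this h0
    rw [uIcc_of_le h1] at hy
    exact ⟨y, hy, hy0⟩
  obtain ⟨y, hy, hy0⟩ := key
  exact ⟨y, fun i hi => h3 y hy i hi, by linarith⟩


/-- Number of crossings of `c` along the orbit segment of length `i`. -/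
noncomputable def cr (f : ℝ → ℝ) (c x : ℝ) (i : ℕ) : ℕ :=
  ((Finset.range i).filter fun j => (f^[j] x - c) * (f^[j + 1] x - c) < 0).card

theorem cr_zero (f : ℝ → ℝ) (c x : ℝ) : cr f c x 0 = 0 := rfl

theorem cr_succ (f : ℝ → ℝ) (c x : ℝ) (i : ℕ) :
    cr f c x (i + 1) = cr f c x i + if (f^[i] x - c) * (f^[i + 1] x - c) < 0 then 1 else 0 := by
  unfold cr
  rw [Finset.range_add_one, Finset.filter_insert]
  split_ifs with h
  · rw [Finset.card_insert_of_notMem (fun h => Finset.notMem_range_self (Finset.mem_filter.1 h).1)]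
  · rfl

theorem cr_add (f : ℝ → ℝ) (c x : ℝ) (i j : ℕ) :
    cr f c x (i + j) = cr f c x i + cr f c (f^[i] x) j := by
  induction j with
  | zero => simp [cr_zero]
  | succ j ih =>
    rw [← add_assoc, cr_succ, cr_succ, ih, ← iterate_add_apply, ← iterate_add_apply]
    rw [show j + i = i + j by omega, show j + 1 + i = i + j + 1 by omega]
    ring

theorem cr_sign (f : ℝ → ℝ) (c x : ℝ) (i : ℕ) (h : ∀ j ≤ i, f^[j] x ≠ c) :
    0 < (x - c) * (f^[i] x - c) * (-1) ^ (cr f c x i) := by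
  induction i with
  | zero =>
    have := h 0 le_rfl
    simp only [iterate_zero, id] at this
    have h2 : x - c ≠ 0 := sub_ne_zero.2 this
    simp [cr_zero]; positivity
  | succ i ih =>
    have ih := ih (fun j hj => h j (by omega))
    have h1 : f^[i] x - c ≠ 0 := sub_ne_zero.2 (h i (by omega))
    have h2 : f^[i+1] x - c ≠ 0 := sub_ne_zero.2 (h (i+1) le_rfl)
    rw [cr_succ]
    set A := f^[i] x - c
    set B := f^[i+1] x - c
    have hA : 0 < A ^ 2 := by positivity
    split_ifs with hAB
    · have := mul_pos ih (neg_pos.2 hAB)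
      rw [pow_succ]
      have h3 : 0 < A ^ 2 * ((x - c) * B * ((-1) ^ cr f c x i * -1)) := by
        calc _ < _ := this
          _ = _ := by ring
      exact pos_of_mul_pos_right h3 hA.le
    · have hAB' : 0 < A * B := lt_of_le_of_ne (not_lt.1 hAB) (mul_ne_zero h1 h2).symm
      have := mul_pos ih hAB'
      have h3 : 0 < A ^ 2 * ((x - c) * B * ((-1) ^ (cr f c x i + 0))) := by
        calc _ < _ := this
          _ = _ := by ring
      exact pos_of_mul_pos_right h3 hA.le

open Classical in
/-- The modified power map. -/
noncomputable def gmap (f : ℝ → ℝ) (c : ℝ) (k μ : ℕ) (x : ℝ) : ℝ :=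
  if cr f c x k = μ then f^[k] x else c

theorem iter_fix (f : ℝ → ℝ) (c : ℝ) (hc : f c = c) (j : ℕ) : f^[j] c = c :=
  iterate_fixed hc j

theorem gmap_c (f : ℝ → ℝ) (c : ℝ) (k μ : ℕ) (hc : f c = c) : gmap f c k μ c = c := by
  unfold gmap; split_ifs
  · exact iter_fix f c hc k
  · rfl

theorem gmap_of_ne (f : ℝ → ℝ) (c : ℝ) (k μ : ℕ) (x : ℝ) (h : gmap f c k μ x ≠ c) :
    cr f c x k = μ ∧ gmap f c k μ x = f^[k] x := by
  unfold gmap at *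
  split_ifs at * with h1
  · exact ⟨h1, rfl⟩
  · exact absurd rfl h

theorem iter_ne_of_le (f : ℝ → ℝ) (c : ℝ) (hc : f c = c) (x : ℝ) (i j : ℕ) (hij : i ≤ j)
    (h : f^[j] x ≠ c) : f^[i] x ≠ c := by
  intro he
  apply h
  obtain ⟨d, rfl⟩ := Nat.exists_eq_add_of_le hij
  rw [add_comm, iterate_add_apply, he, iter_fix f c hc]

theorem iter_continuousOn (f : ℝ → ℝ) (J : Set ℝ) (hf : ContinuousOn f J) (hm : MapsTo f J J)
    (i : ℕ) : ContinuousOn f^[i] J := by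
  induction i with
  | zero => exact continuousOn_id
  | succ i ih => rw [iterate_succ]; exact ih.comp hf hm

theorem gmap_mapsTo (f : ℝ → ℝ) (J : Set ℝ) (hm : MapsTo f J J) (c : ℝ) (hcJ : c ∈ J) (k μ : ℕ) :
    MapsTo (gmap f c k μ) J J := by
  intro x hx
  unfold gmap; split_ifs
  · exact hm.iterate k hx
  · exact hcJ

theorem gmap_continuousOn (f : ℝ → ℝ) (J : Set ℝ) (hf : ContinuousOn f J) (hm : MapsTo f J J)
    (c : ℝ) (hc : f c = c) (k μ : ℕ) : ContinuousOn (gmap f c k μ) J := by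
  intro x hx
  have hit := fun i => iter_continuousOn f J hf hm i x hx
  by_cases hk : f^[k] x = c
  · have hg : gmap f c k μ x = c := by
      unfold gmap; split_ifs
      · exact hk
      · rfl
    unfold ContinuousWithinAt
    rw [hg]
    have h1 := hit k
    unfold ContinuousWithinAt at h1
    rw [hk] at h1
    rw [tendsto_iff_dist_tendsto_zero] at h1 ⊢
    refine squeeze_zero (fun _ => dist_nonneg) (fun y => ?_) h1
    unfold gmap; split_ifs
    · rfl
    · rw [dist_self]; exact dist_nonneg
  · have hne : ∀ j ≤ k, f^[j] x ≠ c := fun j hj => iter_ne_of_le f c hc x j k hj hk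
    have hev : ∀ᶠ y in nhdsWithin x J, ∀ j ∈ Finset.range (k+1),
        0 < (f^[j] y - c) * (f^[j] x - c) := by
      rw [Filter.eventually_all_finset]
      intro j hj
      have hj' : f^[j] x - c ≠ 0 := sub_ne_zero.2 (hne j (by simpa [Nat.lt_succ_iff] using hj))
      have h1 : Filter.Tendsto (fun y => (f^[j] y - c) * (f^[j] x - c)) (nhdsWithin x J)
          (nhds ((f^[j] x - c) * (f^[j] x - c))) :=
        ((hit j).sub_const c).mul_const _
      exact h1.eventually (lt_mem_nhds (mul_self_pos.2 hj'))
    have hcr : ∀ᶠ y in nhdsWithin x J, cr f c y k = cr f c x k := by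
      filter_upwards [hev] with y hy
      unfold cr
      congr 1
      apply Finset.filter_congr
      intro j hj
      have hj := Finset.mem_range.1 hj
      have h1 := hy j (by simp; omega)
      have h2 := hy (j+1) (by simp; omega)
      have h3 := mul_pos h1 h2
      constructor
      · intro h4
        by_contra h5
        push Not at h5
        nlinarith
      · intro h4
        by_contra h5
        push Not at h5
        nlinarith
    have hge : (gmap f c k μ) =ᶠ[nhdsWithin x J]
        (fun y => if cr f c x k = μ then f^[k] y else c) := by
      filter_upwards [hcr] with y hy
      unfold gmap
      rw [hy]
    refine ContinuousWithinAt.congr_of_eventuallyEq ?_ hge rfl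
    split_ifs
    · exact hit k
    · exact continuousWithinAt_const

theorem cr_mul (f : ℝ → ℝ) (c y : ℝ) (d : ℕ) (hd : f^[d] y = y) (i : ℕ) :
    cr f c y (d * i) = cr f c y d * i := by
  induction i with
  | zero => simp [cr_zero]
  | succ i ih =>
    rw [mul_add, mul_one, cr_add, ih, iterate_mul]
    rw [iterate_fixed hd]; ring

theorem lift_cycle (f : ℝ → ℝ) (c : ℝ) (hc : f c = c) (k m l : ℕ) (hk : 0 < k) (hl : 0 < l)
    (hmk : Nat.Coprime m k) (y : ℝ) (hy : y ≠ c)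
    (hp : minimalPeriod (gmap f c k (2 * m)) y = l) :
    minimalPeriod f y = k * l ∧ cr f c y (k * l) = 2 * m * l ∧ ∀ i, f^[i] y ≠ c := by
  set T := gmap f c k (2 * m) with hT
  have hTc : T c = c := gmap_c f c k _ hc
  have hTl : T^[l] y = y := by rw [← hp]; exact iterate_minimalPeriod
  have hTne : ∀ j, T^[j] y ≠ c := by
    intro j
    refine iter_ne_of_le T c hTc y j (l * (j + 1)) ?_ ?_
    · nlinarith
    · rw [iterate_mul, iterate_fixed hTl]; exact hy
  have hTj : ∀ j, T^[j] y = f^[k * j] y ∧ cr f c y (k * j) = 2 * m * j := by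
    intro j
    induction j with
    | zero => simp [cr_zero]
    | succ j ih =>
      obtain ⟨h1, h2⟩ := gmap_of_ne f c k (2*m) (T^[j] y) (by
        have := hTne (j+1); rwa [iterate_succ_apply'] at this)
      constructor
      · rw [iterate_succ_apply', hT, h2, ih.1, ← iterate_add_apply]
        rw [show k + k * j = k * (j + 1) by ring]
      · rw [mul_add, mul_one, cr_add, ih.2, ← ih.1, h1]; ring
  have hfl : f^[k * l] y = y := by rw [← (hTj l).1, hTl]
  have hne : ∀ i, f^[i] y ≠ c := by
    intro i
    refine iter_ne_of_le f c hc y i (k * l * (i + 1)) ?_ ?_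
    · have : 0 < k * l := by positivity
      nlinarith
    · rw [iterate_mul, iterate_fixed hfl]; exact hy
  refine ⟨?_, (hTj l).2, hne⟩
  set d := minimalPeriod f y with hd
  have hfd : f^[d] y = y := iterate_minimalPeriod
  have hper : IsPeriodicPt f (k * l) y := hfl
  have hdvd : d ∣ k * l := hper.minimalPeriod_dvd
  have hkl : 0 < k * l := by positivity
  obtain ⟨N, hN⟩ := hdvd
  have hN0 : 0 < N := by
    rcases Nat.eq_zero_or_pos N with h | h
    · subst h; omega
    · exact h
  have hs := cr_sign f c y d (fun j _ => hne j)
  rw [hfd] at hs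
  have hev : Even (cr f c y d) := by
    rcases Nat.even_or_odd (cr f c y d) with h | h
    · exact h
    · rw [h.neg_one_pow] at hs
      nlinarith [mul_self_nonneg (y - c)]
  obtain ⟨e, he⟩ := hev
  have h1 : cr f c y d * N = 2 * m * l := by rw [← cr_mul f c y d hfd, ← hN, (hTj l).2]
  rw [he] at h1
  have h2 : e * N = m * l := by nlinarith
  have h3 : d * m = k * e := by
    apply Nat.eq_of_mul_eq_mul_right hN0
    calc d * m * N = (d * N) * m := by ring
      _ = k * (m * l) := by rw [← hN]; ring
      _ = k * e * N := by rw [← h2]; ring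
  have h4 : k ∣ d := (Nat.Coprime.symm hmk).dvd_of_dvd_mul_right ⟨e, h3⟩
  obtain ⟨d', hd'⟩ := h4
  have h5 : IsPeriodicPt T d' y := by
    show T^[d'] y = y
    rw [(hTj d').1, ← hd', hfd]
  have h6 : l ∣ d' := by rw [← hp]; exact h5.minimalPeriod_dvd
  have h7 : k * l ∣ d := by rw [hd']; exact Nat.mul_dvd_mul_left k h6
  exact Nat.dvd_antisymm ⟨N, hN⟩ h7


theorem near_of (p q c : ℝ) (h : 0 < (p - c) * (q - c)) (h2 : |p - c| ≤ |q - c|) :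
    p ∈ uIcc q c := by
  rw [mem_uIcc]
  rcases pos_and_pos_or_neg_and_neg_of_mul_pos h with ⟨h3, h4⟩ | ⟨h3, h4⟩
  · rw [abs_of_pos h3, abs_of_pos h4] at h2
    right; constructor <;> linarith
  · rw [abs_of_neg h3, abs_of_neg h4] at h2
    left; constructor <;> linarith

theorem uIcc_antisymm (p q c : ℝ) (h : p ∈ uIcc q c) (h2 : q ∈ uIcc p c) : p = q := by
  rw [mem_uIcc] at h h2
  rcases h with ⟨h3, h4⟩ | ⟨h3, h4⟩ <;> rcases h2 with ⟨h5, h6⟩ | ⟨h5, h6⟩ <;> linarith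

theorem uIcc_mid (x y z c : ℝ) (h : z ∈ uIcc x c) (h2 : y ∈ uIcc x z) (h3 : y ∈ uIcc z c) :
    y = z := by
  rw [mem_uIcc] at h h2 h3
  rcases h with ⟨h9, h4⟩ | ⟨h9, h4⟩ <;> rcases h2 with ⟨h5, h6⟩ | ⟨h5, h6⟩ <;>
  rcases h3 with ⟨h7, h8⟩ | ⟨h7, h8⟩ <;> linarith

theorem uIcc_trans (p q r c : ℝ) (h : p ∈ uIcc q c) (h2 : q ∈ uIcc r c) : p ∈ uIcc r c :=
  uIcc_subset_uIcc_right h2 h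

theorem horseshoe (T : ℝ → ℝ) (c x z : ℝ) (hf : ContinuousOn T (uIcc x c))
    (hx : T x = c) (hc : T c = c) (hxc : x ≠ c) (hz : z ∈ uIcc x c) (hxz : x ∈ uIcc (T z) c)
    (l : ℕ) (hl : 0 < l) : ∃ y ∈ uIcc x c, y ≠ c ∧ minimalPeriod T y = l := by
  have hTz : T z ≠ c := by
    intro h
    rw [h, uIcc_self] at hxz
    exact hxc hxz
  have hzx : z ≠ x := fun h => hTz (by rw [h, hx])
  have hzc : z ≠ c := fun h => hTz (by rw [h, hc])
  have s1 : uIcc x z ⊆ uIcc x c := uIcc_subset_uIcc_left hz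
  have s2 : uIcc z c ⊆ uIcc x c := uIcc_subset_uIcc_right hz
  have big : uIcc x c ⊆ uIcc (T z) c := uIcc_subset_uIcc_right hxz
  have c1 : uIcc x c ⊆ T '' uIcc x z := by
    refine big.trans ?_
    have := intermediate_value_uIcc (hf.mono s1)
    rwa [hx, uIcc_comm] at this
  have c2 : uIcc x c ⊆ T '' uIcc z c := by
    refine big.trans ?_
    have := intermediate_value_uIcc (hf.mono s2)
    rwa [hc] at this
  let α : ℕ → ℝ := fun i => if i = 0 ∨ i = l then x else c
  have hα : ∀ i, uIcc (α i) z ⊆ uIcc x c ∧ uIcc x c ⊆ T '' uIcc (α i) z := by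
    intro i
    by_cases h : i = 0 ∨ i = l
    · have : α i = x := if_pos h
      rw [this]; exact ⟨s1, c1⟩
    · have : α i = c := if_neg h
      rw [this, uIcc_comm]; exact ⟨s2, c2⟩
  have h0 : α 0 = x := if_pos (Or.inl rfl)
  have hll : α l = x := if_pos (Or.inr rfl)
  obtain ⟨y, hy, hyl⟩ := loop_lemma T l α (fun _ => z) (fun i _ => hf.mono (hα i).1)
    (fun i _ => ((hα (i+1)).1.trans (hα i).2)) (by rw [h0, hll])
  have hy0 : y ∈ uIcc x z := by have := hy 0 (Nat.zero_le _); rwa [h0] at this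
  have hmid : ∀ i, 0 < i → i < l → T^[i] y ∈ uIcc z c := by
    intro i h1 h2
    have := hy i h2.le
    have h3 : α i = c := if_neg (by omega)
    rwa [h3, uIcc_comm] at this
  have hyz : y ≠ z := by
    intro h
    rcases Nat.lt_or_ge 1 l with h1 | h1
    · have h2 := hmid 1 one_pos h1
      rw [h] at h2
      exact hzx (uIcc_antisymm z x c hz (uIcc_trans _ _ _ _ hxz h2))
    · obtain rfl : l = 1 := by omega
      rw [h] at hyl
      have hyl' : T z = z := hyl
      rw [hyl'] at hxz
      exact hzx (uIcc_antisymm z x c hz hxz)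
  refine ⟨y, s1 hy0, ?_, ?_⟩
  · rintro rfl
    exact hyz (uIcc_mid x y z y hz hy0 right_mem_uIcc)
  · have hper : IsPeriodicPt T l y := hyl
    have hdpos := hper.minimalPeriod_pos hl
    have hdle := Nat.le_of_dvd hl hper.minimalPeriod_dvd
    rcases hdle.lt_or_eq with h | h
    · exfalso
      have h1 := hmid _ hdpos h
      rw [iterate_minimalPeriod] at h1
      exact hyz (uIcc_mid x y z c hz hy0 h1)
    · exact h

theorem hs_lemma (T : ℝ → ℝ) (a b c w x0 : ℝ) (hf : ContinuousOn T (Icc a b)) (hcJ : c ∈ Icc a b)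
    (hc : T c = c) (S : Finset ℝ) (hSJ : ∀ p ∈ S, p ∈ Icc a b)
    (hside : ∀ p ∈ S, ∀ q ∈ S, 0 < (p - c) * (q - c))
    (hS : ∀ p ∈ S, T p ∈ S ∨ T p = c) (hw : w ∈ S) (hwn : ∀ p ∈ S, w ∈ uIcc p c)
    (hx0 : x0 ∈ uIcc w c) (hTx0 : T x0 = w)
    (hU : ∀ U ⊆ S, U.Nonempty → ∃ p ∈ U, T p ∉ U) (l : ℕ) (hl : 0 < l) :
    ∃ y ∈ Icc a b, y ≠ c ∧ minimalPeriod T y = l := by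
  have hne : ∀ p ∈ S, p ≠ c := by
    intro p hp h
    have := hside p hp p hp
    rw [h] at this; simp at this
  suffices h : ∃ x ∈ S, ∃ z, T x = c ∧ z ∈ uIcc x c ∧ x ∈ uIcc (T z) c by
    obtain ⟨x, hxS, z, h1, h2, h3⟩ := h
    have hsub : uIcc x c ⊆ Icc a b := ordConnected_Icc.uIcc_subset (hSJ x hxS) hcJ
    obtain ⟨y, hy, h4, h5⟩ := horseshoe T c x z (hf.mono hsub) h1 hc (hne x hxS) h2 h3 l hl
    exact ⟨y, hsub hy, h4, h5⟩
  obtain ⟨p0, hp0, hp0'⟩ := hU S subset_rfl ⟨w, hw⟩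
  have hA : (S.filter (fun p => T p = c)).Nonempty :=
    ⟨p0, Finset.mem_filter.2 ⟨hp0, (hS p0 hp0).resolve_left hp0'⟩⟩
  obtain ⟨x, hxA, hxmin⟩ := Finset.exists_min_image _ (fun p => |p - c|) hA
  obtain ⟨hxS, hTx⟩ := Finset.mem_filter.1 hxA
  refine ⟨x, hxS, ?_⟩
  by_cases hUne : (S.filter (fun p => |p - c| < |x - c|)).Nonempty
  · obtain ⟨p, hp, hp'⟩ := hU _ (Finset.filter_subset _ _) hUne
    obtain ⟨hpS, hpx⟩ := Finset.mem_filter.1 hp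
    have hTpc : T p ≠ c := by
      intro h
      have := hxmin p (Finset.mem_filter.2 ⟨hpS, h⟩)
      linarith
    have hTpS := (hS p hpS).resolve_right hTpc
    have hge : |x - c| ≤ |T p - c| := by
      by_contra h
      push Not at h
      exact hp' (Finset.mem_filter.2 ⟨hTpS, h⟩)
    exact ⟨p, hTx, near_of _ _ _ (hside p hpS x hxS) hpx.le,
      near_of _ _ _ (hside x hxS _ hTpS) hge⟩
  · rw [Finset.not_nonempty_iff_eq_empty] at hUne
    have hge : |x - c| ≤ |w - c| := by
      by_contra h
      push Not at h
      have : w ∈ S.filter (fun p => |p - c| < |x - c|) := Finset.mem_filter.2 ⟨hw, h⟩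
      rw [hUne] at this
      exact absurd this (Finset.notMem_empty _)
    have hxw : x = w := uIcc_antisymm x w c (near_of _ _ _ (hside x hxS w hw) hge) (hwn x hxS)
    refine ⟨x0, hTx, ?_, ?_⟩
    · rw [hxw]; exact hx0
    · rw [hTx0, hxw]; exact left_mem_uIcc

theorem one_lemma (T : ℝ → ℝ) (a b c w x0 : ℝ) (hf : ContinuousOn T (Icc a b)) (hcJ : c ∈ Icc a b)
    (hc : T c = c) (S : Finset ℝ) (hSJ : ∀ p ∈ S, p ∈ Icc a b)
    (hside : ∀ p ∈ S, ∀ q ∈ S, 0 < (p - c) * (q - c))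
    (hS : ∀ p ∈ S, T p ∈ S ∨ T p = c) (hw : w ∈ S) (hwn : ∀ p ∈ S, w ∈ uIcc p c)
    (hx0 : x0 ∈ uIcc w c) (hTx0 : T x0 = w) :
    ∃ y ∈ Icc a b, y ≠ c ∧ minimalPeriod T y = 1 := by
  have hne : ∀ p ∈ S, p ≠ c := by
    intro p hp h
    have := hside p hp p hp
    rw [h] at this; simp at this
  obtain ⟨p, hpS, hpmax⟩ := Finset.exists_max_image S (fun p => |p - c|) ⟨w, hw⟩
  have hTp : T p ∈ uIcc p c := by
    rcases hS p hpS with h | h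
    · exact near_of _ _ _ (hside _ h _ hpS) (hpmax _ h)
    · rw [h]; exact right_mem_uIcc
  have hx0p : x0 ∈ uIcc p c := uIcc_trans _ _ _ _ hx0 (hwn p hpS)
  have hx0c : x0 ≠ c := by
    rintro rfl
    exact hne w hw (by rw [← hTx0, hc])
  have hsub : uIcc p x0 ⊆ uIcc p c := uIcc_subset_uIcc_left hx0p
  have hsubJ : uIcc p x0 ⊆ Icc a b :=
    hsub.trans (ordConnected_Icc.uIcc_subset (hSJ p hpS) hcJ)
  have hco : ContinuousOn (fun y => T y - y) (uIcc p x0) := (hf.mono hsubJ).sub continuousOn_id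
  have h0 : (0:ℝ) ∈ uIcc (T p - p) (T x0 - x0) := by
    rw [hTx0]
    have hpc := hne p hpS
    rw [mem_uIcc] at *
    rcases hTp with ⟨h1, h2⟩ | ⟨h1, h2⟩ <;> rcases hx0 with ⟨h3, h4⟩ | ⟨h3, h4⟩ <;>
    rcases hx0p with ⟨h5, h6⟩ | ⟨h5, h6⟩
    · right; constructor <;> linarith
    · exact absurd (by linarith) hx0c
    · exact absurd (by linarith) hx0c
    · exact absurd (by linarith) hpc
    · exact absurd (by linarith) hpc
    · exact absurd (by linarith) hx0c
    · exact absurd (by linarith) hx0c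
    · left; constructor <;> linarith
  obtain ⟨y, hy, hy0⟩ := intermediate_value_uIcc hco h0
  refine ⟨y, hsubJ hy, ?_, ?_⟩
  · rintro rfl
    exact hx0c (uIcc_mid p y x0 y hx0p hy right_mem_uIcc).symm
  · rw [minimalPeriod_eq_one_iff_isFixedPt]
    show T y = y
    simp only at hy0
    linarith


/-- The orbit as a finite set. -/
noncomputable def orb (f : ℝ → ℝ) (x : ℝ) : Finset ℝ :=
  (Finset.range (minimalPeriod f x)).image (fun i => f^[i] x)

theorem mem_orb (f : ℝ → ℝ) (x : ℝ) (h : 0 < minimalPeriod f x) (p : ℝ) :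
    p ∈ orb f x ↔ ∃ i, f^[i] x = p := by
  unfold orb
  rw [Finset.mem_image]
  constructor
  · rintro ⟨i, _, h⟩; exact ⟨i, h⟩
  · rintro ⟨i, hi⟩
    refine ⟨i % minimalPeriod f x, Finset.mem_range.2 (Nat.mod_lt _ h), ?_⟩
    rw [iterate_mod_minimalPeriod_eq, hi]

theorem orb_trans (f : ℝ → ℝ) (x : ℝ) (h : 0 < minimalPeriod f x) (p q : ℝ)
    (hp : p ∈ orb f x) (hq : q ∈ orb f x) : ∃ t, f^[t] p = q := by
  rw [mem_orb f x h] at hp hq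
  obtain ⟨i, hi⟩ := hp
  obtain ⟨j, hj⟩ := hq
  refine ⟨j + (minimalPeriod f x * (i + 1) - i), ?_⟩
  rw [← hi, ← iterate_add_apply, ← hj]
  have h1 : i ≤ minimalPeriod f x * (i + 1) := by nlinarith
  rw [show j + (minimalPeriod f x * (i + 1) - i) + i = j + minimalPeriod f x * (i + 1) by omega]
  rw [iterate_add_apply, iterate_mul, iterate_fixed iterate_minimalPeriod]

theorem orb_period (f : ℝ → ℝ) (x : ℝ) (h : 0 < minimalPeriod f x) (p : ℝ)
    (hp : p ∈ orb f x) : minimalPeriod f p = minimalPeriod f x := by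
  rw [mem_orb f x h] at hp
  obtain ⟨i, hi⟩ := hp
  rw [← hi]
  exact minimalPeriod_apply_iterate (minimalPeriod_pos_iff_mem_periodicPts.1 h) i

theorem orb_maps (f : ℝ → ℝ) (x : ℝ) (h : 0 < minimalPeriod f x) (p : ℝ)
    (hp : p ∈ orb f x) : f p ∈ orb f x := by
  rw [mem_orb f x h] at *
  obtain ⟨i, hi⟩ := hp
  exact ⟨i + 1, by rw [iterate_succ_apply', hi]⟩

theorem orb_ne (f : ℝ → ℝ) (x : ℝ) (h : 2 ≤ minimalPeriod f x) (p : ℝ)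
    (hp : p ∈ orb f x) : f p ≠ p := by
  intro he
  have := orb_period f x (by omega) p hp
  have h1 := minimalPeriod_eq_one_iff_isFixedPt.2 he
  omega

theorem orb_mem_J (f : ℝ → ℝ) (J : Set ℝ) (hm : MapsTo f J J) (x : ℝ) (hx : x ∈ J) (p : ℝ)
    (hp : p ∈ orb f x) : p ∈ J := by
  unfold orb at hp
  rw [Finset.mem_image] at hp
  obtain ⟨i, _, hi⟩ := hp
  rw [← hi]; exact hm.iterate i hx

theorem self_mem_orb (f : ℝ → ℝ) (x : ℝ) (h : 0 < minimalPeriod f x) : x ∈ orb f x :=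
  (mem_orb f x h x).2 ⟨0, rfl⟩

theorem center_lemma (f : ℝ → ℝ) (a b : ℝ) (hf : ContinuousOn f (Icc a b)) (P : Finset ℝ)
    (hP : P.Nonempty) (hPJ : ∀ p ∈ P, p ∈ Icc a b) (hfP : ∀ p ∈ P, f p ∈ P)
    (hne : ∀ p ∈ P, f p ≠ p) :
    ∃ u ∈ P, ∃ v ∈ P, ∃ c, u < c ∧ c < v ∧ f c = c ∧ v ≤ f u ∧ f v ≤ u ∧
      (∀ p ∈ P, p ≤ u ∨ v ≤ p) ∧ (∀ p ∈ P, p < c → p < f p) := by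
  have h1 : (P.filter (fun p => f p < p)).Nonempty := by
    refine ⟨P.max' hP, Finset.mem_filter.2 ⟨P.max'_mem hP, ?_⟩⟩
    exact lt_of_le_of_ne (P.le_max' _ (hfP _ (P.max'_mem hP))) (hne _ (P.max'_mem hP))
  obtain ⟨v, hv, hvmin⟩ := Finset.exists_min_image _ id h1
  obtain ⟨hvP, hfv⟩ := Finset.mem_filter.1 hv
  have h2 : (P.filter (fun p => p < v)).Nonempty := ⟨f v, Finset.mem_filter.2 ⟨hfP v hvP, hfv⟩⟩
  obtain ⟨u, hu, humax⟩ := Finset.exists_max_image _ id h2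
  obtain ⟨huP, huv⟩ := Finset.mem_filter.1 hu
  have hup : ∀ p ∈ P, p < v → p < f p := by
    intro p hp hpv
    by_contra h
    have h3 := hvmin p (Finset.mem_filter.2 ⟨hp, lt_of_le_of_ne (not_lt.1 h) (hne p hp)⟩)
    simp only [id] at h3; linarith
  have hsep : ∀ p ∈ P, p ≤ u ∨ v ≤ p := by
    intro p hp
    rcases lt_or_ge p v with h | h
    · exact Or.inl (humax p (Finset.mem_filter.2 ⟨hp, h⟩))
    · exact Or.inr h
  have hfu : u < f u := hup u huP huv
  have hfuv : v ≤ f u := (hsep _ (hfP u huP)).resolve_left (not_le.2 hfu)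
  have hfvu : f v ≤ u := (hsep _ (hfP v hvP)).resolve_right (not_le.2 hfv)
  have hsub : Icc u v ⊆ Icc a b := Icc_subset_Icc (hPJ u huP).1 (hPJ v hvP).2
  have hco : ContinuousOn (fun y => f y - y) (Icc u v) := (hf.mono hsub).sub continuousOn_id
  obtain ⟨c, hcm, hc⟩ := intermediate_value_Icc' huv.le hco
    (show (0:ℝ) ∈ Icc (f v - v) (f u - u) from ⟨by linarith, by linarith⟩)
  simp only at hc
  have hc' : f c = c := by linarith
  refine ⟨u, huP, v, hvP, c, ?_, ?_, hc', hfuv, hfvu, hsep, ?_⟩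
  · exact lt_of_le_of_ne hcm.1 (by rintro rfl; exact hne _ huP hc')
  · exact lt_of_le_of_ne hcm.2 (by rintro rfl; exact hne _ hvP hc')
  · intro p hp hpc
    exact hup p hp (by linarith [hcm.2])

theorem cover_step (f : ℝ → ℝ) (a b c x : ℝ) (hf : ContinuousOn f (Icc a b)) (hcJ : c ∈ Icc a b)
    (hc : f c = c) (hx : x ∈ Icc a b) : uIcc (f x) c ⊆ f '' uIcc x c := by
  have := intermediate_value_uIcc (hf.mono (ordConnected_Icc.uIcc_subset hx hcJ))
  rwa [hc] at this

/-- Data from a cycle: the setting for the second-power map. -/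
theorem two_setup (f : ℝ → ℝ) (a b : ℝ) (hf : ContinuousOn f (Icc a b))
    (hm : MapsTo f (Icc a b) (Icc a b)) (x : ℝ) (hx : x ∈ Icc a b) (hn : 2 ≤ minimalPeriod f x) :
    ∃ c ∈ Icc a b, f c = c ∧ ∃ w x0, w ∈ (orb f x).filter (fun p => p < c) ∧
      (∀ p ∈ (orb f x).filter (fun p => p < c), w ∈ uIcc p c) ∧ x0 ∈ uIcc w c ∧
      gmap f c 2 2 x0 = w ∧
      (∀ p ∈ (orb f x).filter (fun p => p < c), gmap f c 2 2 p ∈ (orb f x).filter (fun p => p < c)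
        ∨ gmap f c 2 2 p = c) ∧ (∃ v ∈ orb f x, c < v) := by
  have hpos : 0 < minimalPeriod f x := by omega
  obtain ⟨u, hu, v, hv, c, huc, hcv, hc, hfu, hfv, hsep, hup⟩ := center_lemma f a b hf (orb f x)
    ⟨x, self_mem_orb f x hpos⟩ (orb_mem_J f _ hm x hx) (orb_maps f x hpos) (orb_ne f x hn)
  have huJ := orb_mem_J f _ hm x hx u hu
  have hvJ := orb_mem_J f _ hm x hx v hv
  have hcJ : c ∈ Icc a b := ⟨huJ.1.trans huc.le, hcv.le.trans hvJ.2⟩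
  have cu : uIcc v c ⊆ f '' uIcc u c :=
    (uIcc_subset_uIcc_right (mem_uIcc.2 (Or.inr ⟨hcv.le, hfu⟩))).trans
      (cover_step f a b c u hf hcJ hc huJ)
  have cv : uIcc u c ⊆ f '' uIcc v c :=
    (uIcc_subset_uIcc_right (mem_uIcc.2 (Or.inl ⟨hfv, huc.le⟩))).trans
      (cover_step f a b c v hf hcJ hc hvJ)
  obtain ⟨y1, hy1, hfy1⟩ := cv left_mem_uIcc
  obtain ⟨x0, hx0, hfx0⟩ := cu hy1
  have hy1c : c < y1 := by
    rw [uIcc_of_ge hcv.le] at hy1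
    refine lt_of_le_of_ne hy1.1 ?_
    rintro rfl; linarith
  have hx0c : x0 < c := by
    rw [uIcc_of_le huc.le] at hx0
    refine lt_of_le_of_ne hx0.2 ?_
    rintro rfl; linarith
  refine ⟨c, hcJ, hc, u, x0, Finset.mem_filter.2 ⟨hu, huc⟩, ?_, hx0, ?_, ?_, v, hv, hcv⟩
  · intro p hp
    obtain ⟨hpP, hpc⟩ := Finset.mem_filter.1 hp
    rcases hsep p hpP with h | h
    · exact mem_uIcc.2 (Or.inl ⟨h, huc.le⟩)
    · linarith
  · have h2 : cr f c x0 2 = 2 := by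
      rw [cr_succ, cr_succ, cr_zero]
      simp only [iterate_succ_apply, iterate_zero, id, hfx0, hfy1]
      rw [if_pos (by nlinarith), if_pos (by nlinarith)]
    unfold gmap
    rw [if_pos h2]
    simp only [iterate_succ_apply, iterate_zero, id, hfx0, hfy1]
  · intro p hp
    obtain ⟨hpP, hpc⟩ := Finset.mem_filter.1 hp
    by_cases h : gmap f c 2 2 p = c
    · exact Or.inr h
    · left
      obtain ⟨h1, h2⟩ := gmap_of_ne f c 2 2 p h
      rw [h2] at h ⊢
      have h3 := cr_sign f c p 2 (fun j hj => iter_ne_of_le f c hc p j 2 hj h)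
      rw [h1] at h3
      refine Finset.mem_filter.2 ⟨orb_maps f x hpos _ (orb_maps f x hpos p hpP), ?_⟩
      have h4 : 0 < (p - c) * (f^[2] p - c) := by linarith
      by_contra h5
      push Not at h5
      nlinarith

/-- `f` has a cycle of period `l` in `J`. -/
def HasPer (f : ℝ → ℝ) (J : Set ℝ) (l : ℕ) : Prop := ∃ y ∈ J, minimalPeriod f y = l

theorem shark_two (f : ℝ → ℝ) (a b : ℝ) (hf : ContinuousOn f (Icc a b))
    (hm : MapsTo f (Icc a b) (Icc a b)) (n : ℕ) (hn : 2 ≤ n) (h : HasPer f (Icc a b) n) :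
    HasPer f (Icc a b) 2 := by
  obtain ⟨x, hx, hxn⟩ := h
  obtain ⟨c, hcJ, hc, w, x0, h1, h2, h3, h4, h5, -⟩ := two_setup f a b hf hm x hx (by omega)
  obtain ⟨y, hy, hyc, hy1⟩ := one_lemma (gmap f c 2 2) a b c w x0
    (gmap_continuousOn f _ hf hm c hc 2 2) hcJ (gmap_c f c 2 2 hc) _
    (fun p hp => orb_mem_J f _ hm x hx p (Finset.mem_filter.1 hp).1)
    (fun p hp q hq => mul_pos_of_neg_of_neg (sub_neg.2 (Finset.mem_filter.1 hp).2)
      (sub_neg.2 (Finset.mem_filter.1 hq).2)) h5 h1 h2 h3 h4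
  obtain ⟨h6, -⟩ := lift_cycle f c hc 2 1 1 (by omega) one_pos (by norm_num) y hyc hy1
  exact ⟨y, hy, h6⟩

theorem shark_even (f : ℝ → ℝ) (a b : ℝ) (hf : ContinuousOn f (Icc a b))
    (hm : MapsTo f (Icc a b) (Icc a b)) (n : ℕ) (hn : 2 ≤ n) (hodd : Odd n)
    (h : HasPer f (Icc a b) n) (l : ℕ) (hl : 0 < l) :
    HasPer f (Icc a b) (2 * l) := by
  obtain ⟨x, hx, hxn⟩ := h
  have hpos : 0 < minimalPeriod f x := by omega
  obtain ⟨c, hcJ, hc, w, x0, h1, h2, h3, h4, h5, v, hv, hcv⟩ :=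
    two_setup f a b hf hm x hx (by omega)
  obtain ⟨y, hy, hyc, hy1⟩ := hs_lemma (gmap f c 2 2) a b c w x0
    (gmap_continuousOn f _ hf hm c hc 2 2) hcJ (gmap_c f c 2 2 hc) _
    (fun p hp => orb_mem_J f _ hm x hx p (Finset.mem_filter.1 hp).1)
    (fun p hp q hq => mul_pos_of_neg_of_neg (sub_neg.2 (Finset.mem_filter.1 hp).2)
      (sub_neg.2 (Finset.mem_filter.1 hq).2)) h5 h1 h2 h3 h4 (by
      intro U hU hUne
      by_contra hcon
      push Not at hcon
      obtain ⟨p, hp⟩ := hUne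
      have hstep : ∀ j, f^[2 * j] p ∈ U := by
        intro j
        induction j with
        | zero => exact hp
        | succ j ih =>
          have h6 := hcon _ ih
          have h7 := (Finset.mem_filter.1 (hU h6)).2
          obtain ⟨-, h8⟩ := gmap_of_ne f c 2 2 _ h7.ne
          rw [h8, ← iterate_add_apply] at h6
          rwa [show 2 * (j + 1) = 2 + 2 * j by ring]
      have hpP := (Finset.mem_filter.1 (hU hp)).1
      have hpp := orb_period f x hpos p hpP
      obtain ⟨t, ht⟩ := orb_trans f x hpos p v hpP hv
      have hvU : v ∈ U := by
        rcases Nat.even_or_odd' t with ⟨j, hj | hj⟩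
        · rw [← ht, hj]; exact hstep j
        · obtain ⟨i, hi⟩ := hodd
          have h9 : f^[t + n] p = v := by
            rw [← ht, ← hxn, ← hpp]; exact iterate_add_minimalPeriod_eq
          rw [← h9, show t + n = 2 * (j + i + 1) by omega]
          exact hstep _
      have := (Finset.mem_filter.1 (hU hvU)).2
      linarith) l hl
  obtain ⟨h6, -⟩ := lift_cycle f c hc 2 1 l (by omega) hl (by norm_num) y hyc hy1
  exact ⟨y, hy, h6⟩

theorem shark_one (f : ℝ → ℝ) (a b : ℝ) (hab : a ≤ b) (hf : ContinuousOn f (Icc a b))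
    (hm : MapsTo f (Icc a b) (Icc a b)) : HasPer f (Icc a b) 1 := by
  have ha := hm (left_mem_Icc.2 hab)
  have hb := hm (right_mem_Icc.2 hab)
  have hco : ContinuousOn (fun y => f y - y) (Icc a b) := hf.sub continuousOn_id
  obtain ⟨c, hcm, hc⟩ := intermediate_value_Icc' hab hco
    (show (0:ℝ) ∈ Icc (f b - b) (f a - a) from ⟨by linarith [hb.2], by linarith [ha.1]⟩)
  refine ⟨c, hcm, ?_⟩
  rw [minimalPeriod_eq_one_iff_isFixedPt]
  simp only at hc
  show f c = c
  linarith


theorem shark_odd_min (f : ℝ → ℝ) (a b : ℝ) (hf : ContinuousOn f (Icc a b))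
    (hm : MapsTo f (Icc a b) (Icc a b)) (n : ℕ) (hn : 3 ≤ n) (hodd : Odd n)
    (h : HasPer f (Icc a b) n)
    (hmin : ∀ d, 3 ≤ d → Odd d → HasPer f (Icc a b) d → n ≤ d)
    (l : ℕ) (hlo : Odd l) (hl : n < l) : HasPer f (Icc a b) l := by
  obtain ⟨x, hx, hxn⟩ := h
  have hpos : 0 < minimalPeriod f x := by omega
  obtain ⟨u, hu, v, hv, c, huc, hcv, hc, hfu, hfv, hsep, hup⟩ := center_lemma f a b hf (orb f x)
    ⟨x, self_mem_orb f x hpos⟩ (orb_mem_J f _ hm x hx) (orb_maps f x hpos) (orb_ne f x (by omega))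
  have huJ := orb_mem_J f _ hm x hx u hu
  have hvJ := orb_mem_J f _ hm x hx v hv
  have hcJ : c ∈ Icc a b := ⟨huJ.1.trans huc.le, hcv.le.trans hvJ.2⟩
  have hun : minimalPeriod f u = n := by rw [orb_period f x hpos u hu, hxn]
  have hXn : f^[n] u = u := by rw [← hun]; exact iterate_minimalPeriod
  have hXP : ∀ j, f^[j] u ∈ orb f x := by
    intro j
    induction j with
    | zero => exact hu
    | succ j ih => rw [iterate_succ_apply']; exact orb_maps f x hpos _ ih
  have hXJ : ∀ j, f^[j] u ∈ Icc a b := fun j => orb_mem_J f _ hm x hx _ (hXP j)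
  have hXc : ∀ j, f^[j] u ≠ c := by
    intro j hj
    rcases hsep _ (hXP j) with h1 | h1 <;> linarith
  -- a nonswitching index
  have hns : ∃ j < n, 0 < (f^[j] u - c) * (f^[j+1] u - c) := by
    by_contra hcon
    push Not at hcon
    have hcr : ∀ j ≤ n, cr f c u j = j := by
      intro j
      induction j with
      | zero => intro _; exact cr_zero _ _ _
      | succ j ih =>
        intro hj
        have h1 := hcon j (by omega)
        have h2 : (f^[j] u - c) * (f^[j+1] u - c) < 0 :=
          lt_of_le_of_ne h1 (mul_ne_zero (sub_ne_zero.2 (hXc j)) (sub_ne_zero.2 (hXc (j+1))))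
        rw [cr_succ, ih (by omega), if_pos h2]
    have h3 := cr_sign f c u n (fun j _ => hXc j)
    rw [hcr n le_rfl, hXn, hodd.neg_one_pow] at h3
    nlinarith [mul_self_nonneg (u - c)]
  obtain ⟨j0, hj0n, hj0⟩ := hns
  have cu : uIcc v c ⊆ uIcc (f u) c := uIcc_subset_uIcc_right (mem_uIcc.2 (Or.inr ⟨hcv.le, hfu⟩))
  have cv : uIcc u c ⊆ uIcc (f v) c := uIcc_subset_uIcc_right (mem_uIcc.2 (Or.inl ⟨hfv, huc.le⟩))
  have cov : ∀ z ∈ Icc a b, uIcc (f z) c ⊆ f '' uIcc z c :=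
    fun z hz => cover_step f a b c z hf hcJ hc hz
  -- the near point on the side of X j0
  obtain ⟨w, hwJ, hwX, hwc, hfw⟩ : ∃ w ∈ Icc a b, w ∈ uIcc (f^[j0] u) c ∧ w ≠ c ∧
      c ∈ uIcc (f^[j0+1] u) (f w) := by
    rcases pos_and_pos_or_neg_and_neg_of_mul_pos hj0 with ⟨h1, h2⟩ | ⟨h1, h2⟩
    · refine ⟨v, hvJ, ?_, hcv.ne', ?_⟩
      · rcases hsep _ (hXP j0) with h3 | h3
        · linarith
        · exact mem_uIcc.2 (Or.inr ⟨hcv.le, h3⟩)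
      · exact mem_uIcc.2 (Or.inr ⟨by linarith, by linarith⟩)
    · refine ⟨u, huJ, ?_, huc.ne, ?_⟩
      · rcases hsep _ (hXP j0) with h3 | h3
        · exact mem_uIcc.2 (Or.inl ⟨h3, huc.le⟩)
        · linarith
      · exact mem_uIcc.2 (Or.inl ⟨by linarith, by linarith⟩)
  let α : ℕ → ℝ := fun j => if j < n then f^[j] u else if (j - n) % 2 = 0 then u else v
  let β : ℕ → ℝ := fun j => if j = j0 then w else c
  have hα1 : ∀ j < n, α j = f^[j] u := fun j hj => if_pos hj
  have hα2 : ∀ j, n ≤ j → (j - n) % 2 = 0 → α j = u := fun j hj hj2 => by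
    show (if j < n then f^[j] u else if (j - n) % 2 = 0 then u else v) = u
    rw [if_neg (by omega), if_pos hj2]
  have hα3 : ∀ j, n ≤ j → (j - n) % 2 = 1 → α j = v := fun j hj hj2 => by
    show (if j < n then f^[j] u else if (j - n) % 2 = 0 then u else v) = v
    rw [if_neg (by omega), if_neg (by omega)]
  have hβ1 : β j0 = w := if_pos rfl
  have hβ2 : ∀ j, j ≠ j0 → β j = c := fun j hj => if_neg hj
  have hαJ : ∀ j, α j ∈ Icc a b := by
    intro j
    rcases Nat.lt_or_ge j n with h1 | h1
    · rw [hα1 j h1]; exact hXJ j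
    · rcases Nat.mod_two_eq_zero_or_one (j - n) with h2 | h2
      · rw [hα2 j h1 h2]; exact huJ
      · rw [hα3 j h1 h2]; exact hvJ
  have hsubc : ∀ j, uIcc (α j) (β j) ⊆ uIcc (α j) c := by
    intro j
    by_cases h1 : j = j0
    · subst h1; rw [hβ1, hα1 j hj0n]; exact uIcc_subset_uIcc_left hwX
    · rw [hβ2 j h1]
  have hsubJ : ∀ j, uIcc (α j) (β j) ⊆ Icc a b := fun j =>
    (hsubc j).trans (ordConnected_Icc.uIcc_subset (hαJ j) hcJ)
  have hnext : ∀ j, uIcc (α (j+1)) c ⊆ uIcc (f (α j)) c := by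
    intro j
    rcases Nat.lt_or_ge j n with h1 | h1
    · rw [hα1 j h1, ← iterate_succ_apply' f]
      rcases Nat.lt_or_ge (j+1) n with h2 | h2
      · rw [hα1 (j+1) h2]
      · have h3 : j + 1 = n := by omega
        rw [hα2 (j+1) h2 (by rw [h3]; simp), show j.succ = n from h3, hXn]
    · rcases Nat.mod_two_eq_zero_or_one (j - n) with h2 | h2
      · rw [hα2 j h1 h2, hα3 (j+1) (by omega) (by omega)]; exact cu
      · rw [hα3 j h1 h2, hα2 (j+1) (by omega) (by omega)]; exact cv
  have hcover : ∀ j, uIcc (α (j+1)) (β (j+1)) ⊆ f '' uIcc (α j) (β j) := by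
    intro j
    refine (hsubc (j+1)).trans ?_
    by_cases h1 : j = j0
    · have hh := hnext j
      have h2 := intermediate_value_uIcc (hf.mono (hsubJ j))
      refine (hh.trans ?_).trans h2
      subst h1
      rw [hα1 j hj0n, hβ1, ← iterate_succ_apply' f]
      exact uIcc_subset_uIcc_left hfw
    · rw [hβ2 j h1]
      exact (hnext j).trans (cov _ (hαJ j))
  have hln : (l - n) % 2 = 0 := by
    obtain ⟨i, hi⟩ := hodd; obtain ⟨i', hi'⟩ := hlo; omega
  have hα0 : α 0 = u := hα1 0 (by omega)
  have hαl : α l = u := hα2 l hl.le hln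
  have hβl : β l = c := hβ2 l (by omega)
  obtain ⟨y, hy, hyl⟩ := loop_lemma f l α β (fun i _ => hf.mono (hsubJ i)) (fun i _ => hcover i)
    (by rw [hαl, hβl, ← hα0]; exact hsubc 0)
  have hyα : ∀ j ≤ l, f^[j] y ∈ uIcc (α j) c := fun j hj => hsubc j (hy j hj)
  have hy0 : y ≠ c := by
    intro h1
    have h2 := hy j0 (by omega)
    rw [h1, iter_fix f c hc, hα1 j0 hj0n, hβ1] at h2
    exact hwc (uIcc_mid _ c w c hwX h2 right_mem_uIcc).symm
  have hyne : ∀ i, f^[i] y ≠ c := by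
    intro i
    refine iter_ne_of_le f c hc y i (l * (i + 1)) (by nlinarith) ?_
    rw [iterate_mul, iterate_fixed hyl]; exact hy0
  have hyJ : y ∈ Icc a b := hsubJ 0 (hy 0 (Nat.zero_le _))
  have hper : IsPeriodicPt f l y := hyl
  refine ⟨y, hyJ, ?_⟩
  have hdpos := hper.minimalPeriod_pos (by omega)
  have hddvd := hper.minimalPeriod_dvd
  set d := minimalPeriod f y with hd
  have hdodd : Odd d := Odd.of_dvd_nat hlo hddvd
  have hyd : f^[d] y = y := iterate_minimalPeriod
  have hyu : y < c := by
    have h1 := hyα 0 (Nat.zero_le _)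
    rw [hα0, uIcc_of_le huc.le] at h1
    exact lt_of_le_of_ne h1.2 hy0
  have hd1 : d ≠ 1 := by
    intro h1
    rw [h1] at hyd
    have h2 := hyα 1 (by omega)
    rw [hyd, hα1 1 (by omega)] at h2
    simp only [iterate_one] at h2
    rw [uIcc_of_ge (by linarith)] at h2
    linarith [h2.1]
  have hd3 : 3 ≤ d := by
    obtain ⟨i, hi⟩ := hdodd; omega
  have hnd : n ≤ d := hmin d hd3 hdodd ⟨y, hyJ, rfl⟩
  obtain ⟨e, he⟩ := hddvd
  by_contra hne
  have he1 : e ≠ 1 := by rintro rfl; omega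
  have heodd : Odd e := Odd.of_dvd_nat hlo ⟨d, by rw [he]; ring⟩
  have he3 : 3 ≤ e := by obtain ⟨i, hi⟩ := heodd; omega
  have hl3 : n + d < l := by nlinarith
  have h1 := hyα n hl.le
  rw [hα2 n le_rfl (by simp), uIcc_of_le huc.le] at h1
  have h2 := hyα (n + d) hl3.le
  rw [hα3 (n+d) (by omega) (by obtain ⟨i, hi⟩ := hdodd; omega), iterate_add_apply, hyd,
    uIcc_of_ge hcv.le] at h2
  exact hyne n (le_antisymm h1.2 h2.1)

theorem shark_odd (f : ℝ → ℝ) (a b : ℝ) (hf : ContinuousOn f (Icc a b))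
    (hm : MapsTo f (Icc a b) (Icc a b)) (n : ℕ) (hn : 3 ≤ n) (hodd : Odd n)
    (h : HasPer f (Icc a b) n)
    (l : ℕ) (hlo : Odd l) (hl : n ≤ l) : HasPer f (Icc a b) l := by
  classical
  have hex : ∃ d, 3 ≤ d ∧ Odd d ∧ HasPer f (Icc a b) d := ⟨n, hn, hodd, h⟩
  obtain ⟨h1, h2, h3⟩ := Nat.find_spec hex
  have hle : Nat.find hex ≤ n := Nat.find_min' hex ⟨hn, hodd, h⟩
  rcases (hle.trans hl).lt_or_eq with h4 | h4
  · exact shark_odd_min f a b hf hm _ h1 h2 h3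
      (fun d hd1 hd2 hd3 => Nat.find_min' hex ⟨hd1, hd2, hd3⟩) l hlo h4
  · rw [← h4]; exact h3

theorem per_down (f : ℝ → ℝ) (J : Set ℝ) (a b : ℕ) (h : HasPer f J (2 ^ a * b)) :
    HasPer f^[2 ^ a] J b := by
  obtain ⟨y, hy, hyp⟩ := h
  refine ⟨y, hy, ?_⟩
  rw [minimalPeriod_iterate_eq_div_gcd (by positivity), hyp]
  simp

theorem gen_lift (f : ℝ → ℝ) (J : Set ℝ) (a j : ℕ) (h : HasPer f^[2 ^ a] J j) :
    ∃ i ≤ a, HasPer f J (2 ^ i * j) ∧ (Even j → i = a) := by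
  obtain ⟨y, hy, hyp⟩ := h
  rw [minimalPeriod_iterate_eq_div_gcd (by positivity)] at hyp
  obtain ⟨i, hi, hg⟩ := (Nat.dvd_prime_pow Nat.prime_two).1
    (Nat.gcd_dvd_right (minimalPeriod f y) (2 ^ a))
  have hD : minimalPeriod f y = 2 ^ i * j := by
    rw [← hyp, ← hg]
    exact (Nat.mul_div_cancel' (Nat.gcd_dvd_left _ _)).symm
  refine ⟨i, hi, ⟨y, hy, hD⟩, ?_⟩
  rintro ⟨j', hj'⟩
  by_contra hne
  have h1 : 2 ^ (i + 1) ∣ Nat.gcd (minimalPeriod f y) (2 ^ a) := by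
    apply Nat.dvd_gcd
    · rw [hD, hj']; exact ⟨j', by ring⟩
    · exact pow_dvd_pow 2 (by omega)
  rw [hg] at h1
  have := Nat.le_of_dvd (by positivity) h1
  rw [pow_succ] at this
  have : 0 < 2 ^ i := by positivity
  omega

theorem per_even (f : ℝ → ℝ) (a b : ℝ) (hf : ContinuousOn f (Icc a b))
    (hm : MapsTo f (Icc a b) (Icc a b)) (e n : ℕ) (hn : 3 ≤ n) (hodd : Odd n)
    (h : HasPer f (Icc a b) (2 ^ e * n)) (j : ℕ) (hj : 0 < j) :
    HasPer f (Icc a b) (2 ^ e * (2 * j)) := by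
  have h1 := shark_even f^[2 ^ e] a b (iter_continuousOn f _ hf hm _) (hm.iterate _) n (by omega)
    hodd (per_down f _ e n h) j hj
  obtain ⟨i, -, h2, h3⟩ := gen_lift f _ e (2 * j) h1
  rwa [h3 ⟨j, by ring⟩] at h2

theorem pow_step (f : ℝ → ℝ) (a b : ℝ) (hab : a ≤ b) (hf : ContinuousOn f (Icc a b))
    (hm : MapsTo f (Icc a b) (Icc a b)) (e : ℕ) (h : HasPer f (Icc a b) (2 ^ (e + 1))) :
    HasPer f (Icc a b) (2 ^ e) := by
  cases e with
  | zero => exact shark_one f a b hab hf hm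
  | succ e =>
    have h1 := shark_two f^[2 ^ e] a b (iter_continuousOn f _ hf hm _) (hm.iterate _) 4 (by omega)
      (per_down f _ e 4 (by rwa [show 2 ^ e * 4 = 2 ^ (e + 1 + 1) by ring]))
    obtain ⟨i, -, h2, h3⟩ := gen_lift f _ e 2 h1
    rw [h3 even_two] at h2
    exact h2

theorem pow_down (f : ℝ → ℝ) (a b : ℝ) (hab : a ≤ b) (hf : ContinuousOn f (Icc a b))
    (hm : MapsTo f (Icc a b) (Icc a b)) (e d : ℕ) (h : HasPer f (Icc a b) (2 ^ (e + d))) :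
    HasPer f (Icc a b) (2 ^ e) := by
  induction d with
  | zero => exact h
  | succ d ih => exact ih (pow_step f a b hab hf hm _ h)


theorem oddPart_spec (n : ℕ) (hn : 0 < n) :
    2 ^ (n.factorization 2) * oddPart n = n ∧ Odd (oddPart n) := by
  constructor
  · exact Nat.ordProj_mul_ordCompl_eq_self n 2
  · rw [← Nat.not_even_iff_odd, even_iff_two_dvd]
    exact Nat.not_dvd_ordCompl Nat.prime_two (by omega)

theorem sharkovsky (f : ℝ → ℝ) (a b : ℝ) (hab : a ≤ b) (hf : ContinuousOn f (Icc a b))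
    (hm : MapsTo f (Icc a b) (Icc a b)) (n l : ℕ) (hn : 0 < n) (hl : 0 < l)
    (h : HasPer f (Icc a b) n) (hs : SharkLt l n) : HasPer f (Icc a b) l := by
  obtain ⟨n1, n2⟩ := oddPart_spec n hn
  obtain ⟨l1, l2⟩ := oddPart_spec l hl
  have three : ∀ m, Odd m → m ≠ 1 → 3 ≤ m := by
    rintro m ⟨i, hi⟩ h1; omega
  unfold SharkLt at hs
  set A := n.factorization 2
  set B := oddPart n
  set A' := l.factorization 2
  set B' := oddPart l
  rcases hs with ⟨h1, h2, h3⟩ | ⟨h1, h2⟩ | ⟨h1, h2, h3⟩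
  · rw [h2, mul_one] at n1
    rw [h1, mul_one] at l1
    rw [← n1, ← l1] at h3
    have h4 : A' < A := (Nat.pow_lt_pow_iff_right (by norm_num)).1 h3
    rw [← l1]
    refine pow_down f a b hab hf hm A' (A - A') ?_
    rw [show A' + (A - A') = A by omega, n1]; exact h
  · rw [h1, mul_one] at l1
    rw [← n1] at h
    have h4 := fun j hj => per_even f a b hf hm A B (three _ n2 h2) n2 h j hj
    rw [← l1]
    rcases Nat.lt_or_ge A A' with h5 | h5
    · have := h4 (2 ^ (A' - A - 1)) (by positivity)
      rw [← pow_succ', ← pow_add] at this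
      rwa [show A + (A' - A - 1 + 1) = A' by omega] at this
    · refine pow_down f a b hab hf hm A' (A + 1 - A') ?_
      have := h4 1 one_pos
      rw [mul_one, ← pow_succ] at this
      rwa [show A' + (A + 1 - A') = A + 1 by omega]
  · have hB := three _ n2 h2
    have hB' := three _ l2 h1
    rw [← n1] at h
    have key : ∀ A0 B0, 3 ≤ B0 → Odd B0 → HasPer f (Icc a b) (2 ^ A0 * B0) → A0 < A' →
        HasPer f (Icc a b) (2 ^ A' * B') := by
      intro A0 B0 h4 h5 h6 h7
      have := per_even f a b hf hm A0 B0 h4 h5 h6 (2 ^ (A' - A0 - 1) * B') (by positivity)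
      rw [← mul_assoc 2, ← mul_assoc, ← pow_succ', ← pow_add] at this
      rwa [show A0 + (A' - A0 - 1 + 1) = A' by omega] at this
    rw [← l1]
    rcases h3 with h3 | ⟨h3, h4⟩
    · exact key A B hB n2 h h3
    · have h5 := shark_odd f^[2 ^ A] a b (iter_continuousOn f _ hf hm _) (hm.iterate _) B hB n2
        (per_down f _ A B h) B' l2 h4.le
      obtain ⟨i, hi, h6, -⟩ := gen_lift f _ A B' h5
      rcases hi.lt_or_eq with h7 | h7
      · exact key i B' hB' l2 h6 (by omega)
      · rw [h3, ← h7]; exact h6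


theorem walk_exists (lev : ℕ → ℕ → ℤ) (dst : ℕ → ℕ → ℝ) (n k : ℕ) (M : ℤ) (hn : 0 < n)
    (hlp : ∀ t i, lev t (i + n) = lev t i) (hdp : ∀ t i, dst t (i + n) = dst t i)
    (hstep : ∀ t i, lev (t + 1) i = lev t i ∨ lev (t + 1) i = lev t i + 1)
    (hshift : ∀ i, lev k i = lev 0 (i + 1) + M) :
    ∃ τ : ℕ → ℕ, (∀ t i, lev t i = lev t (τ t) → dst t (τ t) ≤ dst t i) ∧
      (∀ t, lev (t + 1) (τ (t + 1)) = lev (t + 1) (τ t)) ∧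
      lev k (τ k) = lev 0 (τ 0) + M := by
  classical
  have hlm : ∀ t i, lev t (i % n) = lev t i := fun t i =>
    Function.Periodic.map_mod_nat (f := lev t) (hlp t) i
  have hdm : ∀ t i, dst t (i % n) = dst t i := fun t i =>
    Function.Periodic.map_mod_nat (f := dst t) (hdp t) i
  have htop : ∀ (t : ℕ) (μ : ℤ), ∃ i, (∃ i', lev t i' = μ) →
      lev t i = μ ∧ ∀ i', lev t i' = μ → dst t i ≤ dst t i' := by
    intro t μ
    by_cases hocc : ∃ i', lev t i' = μ
    · obtain ⟨i', hi'⟩ := hocc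
      have hne : ((Finset.range n).filter (fun i => lev t i = μ)).Nonempty :=
        ⟨i' % n, Finset.mem_filter.2 ⟨Finset.mem_range.2 (Nat.mod_lt _ hn), by rw [hlm, hi']⟩⟩
      obtain ⟨i, hi, hmin⟩ := Finset.exists_min_image _ (dst t) hne
      refine ⟨i, fun _ => ⟨(Finset.mem_filter.1 hi).2, fun j hj => ?_⟩⟩
      rw [← hdm t j]
      exact hmin _ (Finset.mem_filter.2 ⟨Finset.mem_range.2 (Nat.mod_lt _ hn), by rw [hlm, hj]⟩)
    · exact ⟨0, fun h => absurd h hocc⟩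
  choose top htop using htop
  let walk : ℤ → ℕ → ℤ := fun μ t => Nat.rec μ (fun t w => lev (t + 1) (top t w)) t
  have hw0 : ∀ μ, walk μ 0 = μ := fun μ => rfl
  have hws : ∀ μ t, walk μ (t + 1) = lev (t + 1) (top t (walk μ t)) := fun μ t => rfl
  have hocc : ∀ μ, (∃ i, lev 0 i = μ) → ∀ t, ∃ i, lev t i = walk μ t := by
    intro μ h0 t
    cases t with
    | zero => exact h0
    | succ t => exact ⟨_, (hws μ t).symm⟩
  have hmono : ∀ μ μ', (∃ i, lev 0 i = μ) → (∃ i, lev 0 i = μ') → μ ≤ μ' →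
      ∀ t, walk μ t ≤ walk μ' t := by
    intro μ μ' h1 h2 hle t
    induction t with
    | zero => exact hle
    | succ t ih =>
      rcases ih.lt_or_eq with h | h
      · rw [hws, hws]
        have e1 := (htop t (walk μ t) (hocc μ h1 t)).1
        have e2 := (htop t (walk μ' t) (hocc μ' h2 t)).1
        rcases hstep t (top t (walk μ t)) with h3 | h3 <;>
        rcases hstep t (top t (walk μ' t)) with h4 | h4 <;> omega
      · rw [hws, hws, h]
  have hPhi : ∀ μ, (∃ i, lev 0 i = μ) → ∃ i, lev 0 i = walk μ k - M := by
    intro μ h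
    obtain ⟨i, hi⟩ := hocc μ h k
    exact ⟨i + 1, by have := hshift i; omega⟩
  let O : Finset ℤ := (Finset.range n).image (lev 0)
  have hO : ∀ μ, μ ∈ O ↔ ∃ i, lev 0 i = μ := by
    intro μ
    rw [Finset.mem_image]
    constructor
    · rintro ⟨i, -, h⟩; exact ⟨i, h⟩
    · rintro ⟨i, h⟩
      exact ⟨i % n, Finset.mem_range.2 (Nat.mod_lt _ hn), by rw [hlm, h]⟩
  have hOne : O.Nonempty := ⟨lev 0 0, (hO _).2 ⟨0, rfl⟩⟩
  have hne : (O.filter (fun μ => μ ≤ walk μ k - M)).Nonempty := by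
    refine ⟨O.min' hOne, Finset.mem_filter.2 ⟨O.min'_mem hOne, ?_⟩⟩
    exact O.min'_le _ ((hO _).2 (hPhi _ ((hO _).1 (O.min'_mem hOne))))
  obtain ⟨μ, hμ, hμmax⟩ := Finset.exists_max_image _ id hne
  obtain ⟨hμO, hμle⟩ := Finset.mem_filter.1 hμ
  have hμo := (hO _).1 hμO
  have hΦo := hPhi μ hμo
  have h1 := hmono _ _ hμo hΦo hμle k
  have h2 := hμmax (walk μ k - M) (Finset.mem_filter.2 ⟨(hO _).2 hΦo, by omega⟩)
  simp only [id] at h2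
  refine ⟨fun t => top t (walk μ t), ?_, ?_, ?_⟩
  · intro t i hi
    have h3 := htop t _ (hocc μ hμo t)
    exact h3.2 i (by rw [hi, h3.1])
  · intro t
    have h3 := htop (t+1) _ (hocc μ hμo (t+1))
    show lev (t + 1) (top (t+1) (walk μ (t+1))) = lev (t + 1) (top t (walk μ t))
    rw [h3.1, hws]
  · show lev k (top k (walk μ k)) = lev 0 (top 0 (walk μ 0)) + M
    rw [(htop k _ (hocc μ hμo k)).1, (htop 0 _ (hocc μ hμo 0)).1, hw0]
    omega

theorem same_side_trans (p q r c : ℝ) (h1 : 0 < (p - c) * (q - c)) (h2 : 0 < (q - c) * (r - c)) :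
    0 < (p - c) * (r - c) := by
  rcases pos_and_pos_or_neg_and_neg_of_mul_pos h1 with ⟨h3, h4⟩ | ⟨h3, h4⟩ <;>
  rcases pos_and_pos_or_neg_and_neg_of_mul_pos h2 with ⟨h5, h6⟩ | ⟨h5, h6⟩
  · exact mul_pos h3 h6
  · linarith
  · linarith
  · exact mul_pos_of_neg_of_neg h3 h6

theorem same_side_of_uIcc (p q c : ℝ) (h : p ∈ uIcc q c) (hp : p ≠ c) :
    0 < (p - c) * (q - c) := by
  rw [mem_uIcc] at h
  rcases h with ⟨h1, h2⟩ | ⟨h1, h2⟩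
  · have : p < c := lt_of_le_of_ne h2 hp
    exact mul_pos_of_neg_of_neg (by linarith) (by linarith)
  · have : c < p := lt_of_le_of_ne h1 hp.symm
    exact mul_pos (by linarith) (by linarith)

theorem cross_congr (p q p' q' c : ℝ) (h1 : 0 < (p - c) * (p' - c)) (h2 : 0 < (q - c) * (q' - c)) :
    (p - c) * (q - c) < 0 ↔ (p' - c) * (q' - c) < 0 := by
  have h3 := mul_pos h1 h2
  constructor
  · intro h4
    by_contra h5
    push Not at h5
    nlinarith
  · intro h4
    by_contra h5
    push Not at h5
    nlinarith

theorem main_aux (f : ℝ → ℝ) (a b c : ℝ) (hf : ContinuousOn f (Icc a b))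
    (hm : MapsTo f (Icc a b) (Icc a b)) (hcJ : c ∈ Icc a b) (hc : f c = c)
    (k m n l : ℕ) (hk : 0 < k) (hn : 0 < n) (hl : 0 < l)
    (x : ℝ) (hx : x ∈ Icc a b) (hxc : x ≠ c) (hper : minimalPeriod f x = k * n)
    (hcr : cr f c x (k * n) = 2 * m * n) (hs : SharkLt l n) :
    ∃ y ∈ Icc a b, y ≠ c ∧ minimalPeriod (gmap f c k (2 * m)) y = l := by
  classical
  have hfix : f^[k * n] x = x := by rw [← hper]; exact iterate_minimalPeriod
  have hkn : 0 < k * n := by positivity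
  have hXne : ∀ i, f^[i] x ≠ c := by
    intro i
    refine iter_ne_of_le f c hc x i (k * n * (i + 1)) (by nlinarith) ?_
    rw [iterate_mul, iterate_fixed hfix]; exact hxc
  have hXJ : ∀ i, f^[i] x ∈ Icc a b := fun i => hm.iterate i hx
  have hXper : ∀ i, f^[i + k * n] x = f^[i] x := by
    intro i; rw [iterate_add_apply, hfix]
  have hhper : ∀ i, cr f c x (i + k * n) = cr f c x i + 2 * m * n := by
    intro i; rw [add_comm i, cr_add, hfix, hcr]; ring
  set X : ℕ → ℕ → ℝ := fun t i => f^[t + i * k] x with hX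
  set lev : ℕ → ℕ → ℤ := fun t i => (cr f c x (t + i * k) : ℤ) - 2 * m * i with hlev
  have hXn : ∀ t i, X t (i + n) = X t i := by
    intro t i
    simp only [hX]
    rw [show t + (i + n) * k = t + i * k + k * n by ring, hXper]
  have hlevn : ∀ t i, lev t (i + n) = lev t i := by
    intro t i
    simp only [hlev]
    rw [show t + (i + n) * k = t + i * k + k * n by ring, hhper]
    push_cast; ring
  have hlevs : ∀ t i, lev (t+1) i = lev t i + if (X t i - c) * (X (t+1) i - c) < 0 then 1 else 0 := by
    intro t i
    simp only [hlev, hX]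
    rw [show t + 1 + i * k = t + i * k + 1 by ring, cr_succ]
    push_cast; ring
  have hshift : ∀ i, lev k i = lev 0 (i + 1) + 2 * m := by
    intro i
    simp only [hlev]
    rw [show 0 + (i + 1) * k = k + i * k by ring]
    push_cast; ring
  have hXk : ∀ i, X k i = X 0 (i + 1) := by
    intro i
    simp only [hX]
    rw [show 0 + (i + 1) * k = k + i * k by ring]
  have hXf : ∀ t i, f (X t i) = X (t + 1) i := by
    intro t i
    simp only [hX]
    rw [show t + 1 + i * k = t + i * k + 1 by ring, iterate_succ_apply']
  have hXne' : ∀ t i, X t i ≠ c := fun t i => hXne _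
  have hXJ' : ∀ t i, X t i ∈ Icc a b := fun t i => hXJ _
  have hside : ∀ t i i', lev t i = lev t i' → 0 < (X t i - c) * (X t i' - c) := by
    intro t i i' h
    have h1 := cr_sign f c x (t + i * k) (fun j _ => hXne j)
    have h2 := cr_sign f c x (t + i' * k) (fun j _ => hXne j)
    have h3 : ((-1 : ℝ)) ^ (cr f c x (t + i * k)) = (-1) ^ (cr f c x (t + i' * k)) := by
      have hpar : Even (cr f c x (t + i * k)) ↔ Even (cr f c x (t + i' * k)) := by
        simp only [hlev] at h
        have : ((cr f c x (t + i * k) : ℕ) : ℤ) = (cr f c x (t + i' * k) : ℤ) + 2 * (m * (i - i')) := by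
          linarith
        rw [← Int.even_coe_nat, ← Int.even_coe_nat (cr f c x (t + i' * k)), this, Int.even_add]
        simp
      by_cases he : Even (cr f c x (t + i * k))
      · rw [he.neg_one_pow, (hpar.1 he).neg_one_pow]
      · have he' := fun h => he (hpar.2 h)
        rw [Nat.not_even_iff_odd] at he
        rw [he.neg_one_pow, (Nat.not_even_iff_odd.1 he').neg_one_pow]
    rw [h3] at h1
    have h4 := mul_pos h1 h2
    have h5 : 0 < ((x - c) * (-1) ^ (cr f c x (t + i' * k))) ^ 2 * ((X t i - c) * (X t i' - c)) := by
      calc _ < _ := h4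
        _ = _ := by simp only [hX]; ring
    exact pos_of_mul_pos_right h5 (sq_nonneg _)
  obtain ⟨τ, hτ1, hτ2, hτ3⟩ := walk_exists lev (fun t i => |X t i - c|) n k (2 * m) hn hlevn
    (fun t i => by simp only [hXn]) (fun t i => by
      rw [hlevs]; split_ifs
      · right; rfl
      · left; simp) hshift
  -- the points W
  set W : ℕ → ℝ := fun t => X t (τ t) with hW
  have hWJ : ∀ t, W t ∈ Icc a b := fun t => hXJ' _ _
  have hWne : ∀ t, W t ≠ c := fun t => hXne' _ _
  have hnear : ∀ t i, lev t i = lev t (τ t) → W t ∈ uIcc (X t i) c := by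
    intro t i h
    exact near_of _ _ _ (hside t _ _ h.symm) (hτ1 t i h)
  have hWs : ∀ t, W (t+1) ∈ uIcc (f (W t)) c := by
    intro t
    have := hnear (t+1) (τ t) (hτ2 t).symm
    rw [← hXf] at this
    exact this
  have hlev0 : lev 0 (τ k + 1) = lev 0 (τ 0) := by
    have := hshift (τ k); omega
  have hW0 : W 0 ∈ uIcc (W k) c := by
    have := hnear 0 (τ k + 1) hlev0
    rw [← hXk] at this
    exact this
  obtain ⟨x1, hx1, hx1i, hx1k⟩ := chain_point f (fun t => uIcc (W t) c) k (fun i _ =>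
    (uIcc_subset_uIcc_right (hWs i)).trans (cover_step f a b c (W i) hf hcJ hc (hWJ i))) (W 0) hW0
  have hx1ne : ∀ i ≤ k, f^[i] x1 ≠ c := by
    intro i hi
    refine iter_ne_of_le f c hc x1 i k hi ?_
    rw [hx1k]; exact hWne 0
  have hx1s : ∀ i ≤ k, 0 < (f^[i] x1 - c) * (W i - c) := fun i hi =>
    same_side_of_uIcc _ _ _ (hx1i i hi) (hx1ne i hi)
  have hx1cr : ∀ i ≤ k, (cr f c x1 i : ℤ) = lev i (τ i) - lev 0 (τ 0) := by
    intro i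
    induction i with
    | zero => intro _; simp [cr_zero]
    | succ i ih =>
      intro hi
      have h1 := ih (by omega)
      rw [hτ2 i, hlevs, cr_succ]
      have h2 : 0 < (W (i+1) - c) * (X (i+1) (τ i) - c) := hside _ _ _ (hτ2 i)
      have h3 := cross_congr (f^[i] x1) (f^[i+1] x1) (X i (τ i)) (X (i+1) (τ i)) c (hx1s i (by omega))
        (same_side_trans _ _ _ _ (hx1s (i+1) hi) h2)
      push_cast
      rw [h1]
      by_cases h4 : (f^[i] x1 - c) * (f^[i+1] x1 - c) < 0
      · rw [if_pos h4, if_pos (h3.1 h4)]; ring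
      · rw [if_neg h4, if_neg (fun h => h4 (h3.2 h))]; ring
  set T := gmap f c k (2 * m) with hT
  have hTx1 : T x1 = W 0 := by
    have h1 := hx1cr k le_rfl
    have h2 : cr f c x1 k = 2 * m := by
      have : ((cr f c x1 k : ℕ) : ℤ) = ((2 * m : ℕ) : ℤ) := by push_cast; omega
      exact_mod_cast this
    rw [hT]; unfold gmap; rw [if_pos h2, hx1k]
  have hTX : ∀ i, lev 0 (i+1) = lev 0 i → T (X 0 i) = X 0 (i+1) := by
    intro i hi
    have h1 : cr f c (X 0 i) k = 2 * m := by
      have h2 := cr_add f c x (0 + i * k) k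
      simp only [hlev] at hi
      have h3 : 0 + (i + 1) * k = 0 + i * k + k := by ring
      rw [h3, h2] at hi
      have : ((cr f c (X 0 i) k : ℕ) : ℤ) = ((2 * m : ℕ) : ℤ) := by
        simp only [hX]; push_cast at hi ⊢; linarith
      exact_mod_cast this
    rw [hT]; unfold gmap; rw [if_pos h1]
    simp only [hX]
    rw [← iterate_add_apply, show k + (0 + i * k) = 0 + (i+1) * k by ring]
  have hTX' : ∀ i, lev 0 (i+1) ≠ lev 0 i → T (X 0 i) = c := by
    intro i hi
    have h1 : cr f c (X 0 i) k ≠ 2 * m := by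
      intro h1
      apply hi
      have h2 := cr_add f c x (0 + i * k) k
      simp only [hlev]
      have h3 : 0 + (i + 1) * k = 0 + i * k + k := by ring
      rw [h3, h2]
      simp only [hX] at h1
      rw [h1]; push_cast; ring
    rw [hT]; unfold gmap; rw [if_neg h1]
  have hTf : ContinuousOn T (Icc a b) := gmap_continuousOn f _ hf hm c hc k _
  have hTm : MapsTo T (Icc a b) (Icc a b) := gmap_mapsTo f _ hm c hcJ k _
  have hTc : T c = c := gmap_c f c k _ hc
  set S : Finset ℝ := ((Finset.range n).filter (fun i => lev 0 i = lev 0 (τ 0))).image (X 0) with hSdef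
  have hSm : ∀ p, p ∈ S ↔ ∃ i, lev 0 i = lev 0 (τ 0) ∧ X 0 i = p := by
    intro p
    rw [hSdef, Finset.mem_image]
    constructor
    · rintro ⟨i, hi, h⟩; exact ⟨i, (Finset.mem_filter.1 hi).2, h⟩
    · rintro ⟨i, hi, h⟩
      have e1 : lev 0 (i % n) = lev 0 i := Function.Periodic.map_mod_nat (f := lev 0) (hlevn 0) i
      have e2 : X 0 (i % n) = X 0 i := Function.Periodic.map_mod_nat (f := X 0) (hXn 0) i
      exact ⟨i % n, Finset.mem_filter.2 ⟨Finset.mem_range.2 (Nat.mod_lt _ hn), by rw [e1, hi]⟩,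
        by rw [e2, h]⟩
  have hSJ : ∀ p ∈ S, p ∈ Icc a b := by
    intro p hp
    obtain ⟨i, -, rfl⟩ := (hSm p).1 hp
    exact hXJ' 0 i
  have hSside : ∀ p ∈ S, ∀ q ∈ S, 0 < (p - c) * (q - c) := by
    intro p hp q hq
    obtain ⟨i, h1, rfl⟩ := (hSm p).1 hp
    obtain ⟨j, h2, rfl⟩ := (hSm q).1 hq
    exact hside 0 i j (by rw [h1, h2])
  have hST : ∀ p ∈ S, T p ∈ S ∨ T p = c := by
    intro p hp
    obtain ⟨i, h1, rfl⟩ := (hSm p).1 hp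
    by_cases h2 : lev 0 (i+1) = lev 0 i
    · left; rw [hTX i h2]; exact (hSm _).2 ⟨i+1, by rw [h2, h1], rfl⟩
    · right; exact hTX' i h2
  have hWS : W 0 ∈ S := (hSm _).2 ⟨τ 0, rfl, rfl⟩
  have hWn : ∀ p ∈ S, W 0 ∈ uIcc p c := by
    intro p hp
    obtain ⟨i, h1, rfl⟩ := (hSm p).1 hp
    exact hnear 0 i h1
  by_cases hall : ∀ i, lev 0 i = lev 0 (τ 0)
  · by_cases hl1 : l = 1
    · subst hl1
      exact one_lemma T a b c (W 0) x1 hTf hcJ hTc S hSJ hSside hST hWS hWn hx1 hTx1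
    · have hTj : ∀ j, T^[j] x = f^[k * j] x := by
        intro j
        induction j with
        | zero => rfl
        | succ j ih =>
          rw [iterate_succ_apply', ih]
          have := hTX j (by rw [hall j, hall (j+1)])
          simp only [hX] at this
          rw [show k * j = 0 + j * k by ring, show k * (j + 1) = 0 + (j+1) * k by ring]
          exact this
      have hTper : minimalPeriod T x = n := by
        apply Nat.dvd_antisymm
        · apply IsPeriodicPt.minimalPeriod_dvd
          show T^[n] x = x
          rw [hTj, hfix]
        · have h1 : f^[k * minimalPeriod T x] x = x := by
            rw [← hTj]; exact iterate_minimalPeriod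
          have h2 : IsPeriodicPt f (k * minimalPeriod T x) x := h1
          have h3 := h2.minimalPeriod_dvd
          rw [hper] at h3
          exact (Nat.mul_dvd_mul_iff_left hk).1 h3
      obtain ⟨y, hy, hyl⟩ := sharkovsky T a b (hcJ.1.trans hcJ.2) hTf hTm n l hn hl ⟨x, hx, hTper⟩ hs
      refine ⟨y, hy, ?_, hyl⟩
      rintro rfl
      apply hl1
      rw [← hyl]
      exact minimalPeriod_eq_one_iff_isFixedPt.2 hTc
  · push Not at hall
    obtain ⟨i1, hi1⟩ := hall
    refine hs_lemma T a b c (W 0) x1 hTf hcJ hTc S hSJ hSside hST hWS hWn hx1 hTx1 ?_ l hl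
    intro U hU hUne
    by_contra hcon
    push Not at hcon
    obtain ⟨p, hp⟩ := hUne
    obtain ⟨i, hi, rfl⟩ := (hSm p).1 (hU hp)
    have hstep : ∀ j, X 0 (i + j) ∈ U ∧ lev 0 (i + j) = lev 0 (τ 0) := by
      intro j
      induction j with
      | zero => exact ⟨hp, hi⟩
      | succ j ih =>
        have h1 := hcon _ ih.1
        by_cases h2 : lev 0 (i + j + 1) = lev 0 (i + j)
        · rw [hTX _ h2] at h1
          exact ⟨h1, by rw [← ih.2, ← h2]; rfl⟩
        · rw [hTX' _ h2] at h1
          have := hSside _ (hU h1) _ (hU h1)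
          simp at this
    apply hi1
    have e1 : ∀ j, lev 0 (i1 + n * j) = lev 0 i1 := by
      intro j
      induction j with
      | zero => rfl
      | succ j ih => rw [show i1 + n * (j + 1) = i1 + n * j + n by ring, hlevn, ih]
    have hge : i ≤ i1 + n * i := by nlinarith
    obtain ⟨d, hd⟩ := Nat.exists_eq_add_of_le hge
    rw [← e1 i, hd]
    exact (hstep d).2


/-- Clipped map. -/
noncomputable def clip (f : ℝ → ℝ) (c e x : ℝ) : ℝ :=
  if x ≤ c then min (max (f x) x) e else min (f x) x

theorem clip_left (f : ℝ → ℝ) (c e x : ℝ) (h : x ≤ c) : clip f c e x = min (max (f x) x) e :=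
  if_pos h

theorem clip_right (f : ℝ → ℝ) (c e x : ℝ) (h : c < x) : clip f c e x = min (f x) x :=
  if_neg (not_le.2 h)

theorem clip_c (f : ℝ → ℝ) (c e : ℝ) (hc : f c = c) (hce : c ≤ e) : clip f c e c = c := by
  rw [clip_left f c e c le_rfl, hc, max_self, min_eq_left hce]

theorem clip_e (f : ℝ → ℝ) (c e : ℝ) (he : f e = e) : clip f c e e = e := by
  rcases lt_or_ge c e with h | h
  · rw [clip_right f c e e h, he, min_self]
  · rw [clip_left f c e e h, he, max_self, min_self]

theorem clip_mapsTo (f : ℝ → ℝ) (a b c e : ℝ) (hm : MapsTo f (Icc a b) (Icc a b))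
    (hac : a ≤ c) (hce : c ≤ e) (heb : e ≤ b) : MapsTo (clip f c e) (Icc a e) (Icc a e) := by
  intro x hx
  have hfx := hm (show x ∈ Icc a b from ⟨hx.1, hx.2.trans heb⟩)
  rcases le_or_gt x c with h | h
  · rw [clip_left f c e x h]
    exact ⟨le_min (le_max_of_le_right hx.1) (hac.trans hce), min_le_right _ _⟩
  · rw [clip_right f c e x h]
    exact ⟨le_min hfx.1 hx.1, (min_le_right _ _).trans hx.2⟩

theorem clip_continuousOn (f : ℝ → ℝ) (a b c e : ℝ) (hf : ContinuousOn f (Icc a b))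
    (hc : f c = c) (hac : a ≤ c) (hce : c ≤ e) (heb : e ≤ b) :
    ContinuousOn (clip f c e) (Icc a e) := by
  have h1 : ContinuousOn (clip f c e) (Icc a c) := by
    have hf1 := hf.mono (show Icc a c ⊆ Icc a b from Icc_subset_Icc le_rfl (hce.trans heb))
    refine ContinuousOn.congr (f := fun x => min (max (f x) x) e) ?_
      (fun x hx => clip_left f c e x hx.2)
    exact (hf1.sup continuousOn_id).inf continuousOn_const
  have h2 : ContinuousOn (clip f c e) (Icc c e) := by
    have hf1 := hf.mono (show Icc c e ⊆ Icc a b from Icc_subset_Icc hac heb)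
    refine ContinuousOn.congr (f := fun x => min (f x) x) (hf1.inf continuousOn_id) ?_
    intro x hx
    rcases hx.1.lt_or_eq with h | h
    · exact clip_right f c e x h
    · rw [← h, clip_c f c e hc hce]; simp [hc]
  rw [← Icc_union_Icc_eq_Icc hac hce]
  exact h1.union_of_isClosed h2 isClosed_Icc isClosed_Icc

theorem agree_iter (f g : ℝ → ℝ) (y : ℝ) (h : ∀ i, g (f^[i] y) = f (f^[i] y)) (i : ℕ) :
    g^[i] y = f^[i] y := by
  induction i with
  | zero => rfl
  | succ i ih => rw [iterate_succ_apply', iterate_succ_apply', ih, h]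

theorem agree_period (f g : ℝ → ℝ) (y : ℝ) (h : ∀ i, g^[i] y = f^[i] y) :
    minimalPeriod g y = minimalPeriod f y := by
  rw [minimalPeriod_eq_minimalPeriod_iff]
  intro n
  unfold IsPeriodicPt IsFixedPt
  rw [h n]

theorem agree_count (f g : ℝ → ℝ) (c y : ℝ) (h : ∀ i, g^[i] y = f^[i] y)
    (hs : ∀ i, (f (f^[i] y) - f^[i] y) * (f^[i] y - c) < 0) (N : ℕ) :
    overCount f y N = cr g c y N := by
  unfold overCount cr
  congr 1
  apply Finset.filter_congr
  intro i _
  rw [h i, h (i+1)]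
  have h1 := hs i
  have h2 := hs (i+1)
  have h3 := mul_pos_of_neg_of_neg h1 h2
  constructor
  · intro h4
    by_contra h5
    push Not at h5
    nlinarith
  · intro h4
    by_contra h5
    push Not at h5
    nlinarith

theorem clip_result (f : ℝ → ℝ) (a b c e : ℝ) (hm : MapsTo f (Icc a b) (Icc a b))
    (hac : a ≤ c) (hce : c ≤ e) (heb : e ≤ b) (hE : f e = e ∨ ∀ x ∈ Icc a e, f x ≤ e)
    (y : ℝ) (hy : y ∈ Icc a e) (hyc : ∀ i, (clip f c e)^[i] y ≠ c)
    (N M : ℕ) (hN : 2 ≤ N) (hper : minimalPeriod (clip f c e) y = N)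
    (hcr : cr (clip f c e) c y N = M) :
    minimalPeriod f y = N ∧ overCount f y N = M := by
  set g := clip f c e with hg
  have hgm := clip_mapsTo f a b c e hm hac hce heb
  have hpos : 0 < minimalPeriod g y := by omega
  have hnf : ∀ i, g (g^[i] y) ≠ g^[i] y := fun i =>
    orb_ne g y (by omega) _ ((mem_orb g y hpos _).2 ⟨i, rfl⟩)
  have key : ∀ i, f (g^[i] y) = g (g^[i] y) ∧ (f (g^[i] y) - g^[i] y) * (g^[i] y - c) < 0 := by
    intro i
    have h1 := hnf i
    have h2 := hnf (i+1)
    rw [iterate_succ_apply'] at h2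
    have h3 := hyc i
    have h4 : g^[i] y ∈ Icc a e := hgm.iterate i hy
    set p := g^[i] y
    rcases lt_or_gt_of_ne h3 with h5 | h5
    · have h6 : g p = min (max (f p) p) e := clip_left f c e p h5.le
      have h7 : p < f p := by
        by_contra h8
        push Not at h8
        rw [max_eq_right h8, min_eq_left h4.2] at h6
        exact h1 h6
      rw [max_eq_left h7.le] at h6
      have h8 : f p ≤ e := by
        rcases hE with hE | hE
        · by_contra h9
          push Not at h9
          rw [min_eq_right h9.le] at h6
          rw [h6] at h2
          exact h2 (clip_e f c e hE)
        · exact hE p h4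
      rw [min_eq_left h8] at h6
      exact ⟨h6.symm, mul_neg_of_pos_of_neg (by linarith) (by linarith)⟩
    · have h6 : g p = min (f p) p := clip_right f c e p h5
      have h7 : f p < p := by
        by_contra h8
        push Not at h8
        rw [min_eq_right h8] at h6
        exact h1 h6
      rw [min_eq_left h7.le] at h6
      exact ⟨h6.symm, mul_neg_of_neg_of_pos (by linarith) (by linarith)⟩
  have hag := agree_iter g f y (fun i => (key i).1)
  constructor
  · rw [agree_period g f y hag, hper]
  · rw [← hcr]
    apply agree_count f g c y (fun i => (hag i).symm)
    intro i
    rw [hag i]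
    exact (key i).2

theorem orb_inv (f : ℝ → ℝ) (x : ℝ) (h : 0 < minimalPeriod f x) (Q : ℝ → Prop) (p q : ℝ)
    (hp : p ∈ orb f x) (hq : q ∈ orb f x) (hQp : Q p) (hQ : ∀ z ∈ orb f x, Q z → Q (f z)) :
    Q q := by
  obtain ⟨t, rfl⟩ := orb_trans f x h p q hp hq
  have : ∀ t, f^[t] p ∈ orb f x ∧ Q (f^[t] p) := by
    intro t
    induction t with
    | zero => exact ⟨hp, hQp⟩
    | succ t ih =>
      rw [iterate_succ_apply']
      exact ⟨orb_maps f x h _ ih.1, hQ _ ih.1 ih.2⟩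
  exact (this t).2

theorem nonsep_horseshoe (g : ℝ → ℝ) (a c e x0 t : ℝ) (hg : ContinuousOn g (Icc a e))
    (hgm : MapsTo g (Icc a e) (Icc a e)) (hgc : g c = c) (hge : g e = e)
    (hax : a ≤ x0) (hxc : x0 < c) (hct : c < t) (hte : t < e) (hgx : g x0 = e) (hgt : g t ≤ x0)
    (k m l : ℕ) (hm : 0 < m) (hkm : 2 * m ≤ k) (hl : 0 < l) :
    ∃ y ∈ Icc a e, y ≠ c ∧ minimalPeriod (gmap g c k (2 * m)) y = l := by
  set A : Set ℝ := Icc x0 c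
  set B : Set ℝ := Icc c e
  have hAJ : A ⊆ Icc a e := Icc_subset_Icc hax (by linarith)
  have hBJ : B ⊆ Icc a e := Icc_subset_Icc (by linarith) le_rfl
  have cAB : B ⊆ g '' A := by
    have := intermediate_value_Icc' hxc.le (hg.mono hAJ)
    rwa [hgx, hgc] at this
  have s1 : Icc c t ⊆ B := Icc_subset_Icc le_rfl hte.le
  have s2 : Icc t e ⊆ B := Icc_subset_Icc hct.le le_rfl
  have cBA : A ⊆ g '' B := by
    have := intermediate_value_Icc' hct.le (hg.mono (s1.trans hBJ))
    rw [hgc] at this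
    exact ((Icc_subset_Icc hgt le_rfl).trans this).trans (image_mono s1)
  have cBB : B ⊆ g '' B := by
    have := intermediate_value_Icc hte.le (hg.mono (s2.trans hBJ))
    rw [hge] at this
    exact ((Icc_subset_Icc (by linarith) le_rfl).trans this).trans (image_mono s2)
  let K : ℕ → Set ℝ := fun i => if i % 2 = 0 ∧ i < 2 * m - 1 then A else B
  have hKA : ∀ i, (i % 2 = 0 ∧ i < 2 * m - 1) → K i = A := fun i h => if_pos h
  have hKB : ∀ i, ¬ (i % 2 = 0 ∧ i < 2 * m - 1) → K i = B := fun i h => if_neg h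
  obtain ⟨z, hz, hzi, hzk⟩ := chain_point g K (k - 1) (by
    intro i _
    by_cases h1 : i % 2 = 0 ∧ i < 2 * m - 1
    · rw [hKA i h1, hKB (i+1) (by omega)]; exact cAB
    · rw [hKB i h1]
      by_cases h2 : (i + 1) % 2 = 0 ∧ i + 1 < 2 * m - 1
      · rw [hKA _ h2]; exact cBA
      · rw [hKB _ h2]; exact cBB) t (by
      rw [hKB (k-1) (by omega)]; exact ⟨hct.le, hte.le⟩)
  rw [hKA 0 (by omega)] at hz
  have hzne : ∀ i ≤ k - 1, g^[i] z ≠ c := fun i hi =>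
    iter_ne_of_le g c hgc z i (k-1) hi (by rw [hzk]; exact hct.ne')
  have hzA : ∀ i ≤ k - 1, (i % 2 = 0 ∧ i < 2 * m - 1) → g^[i] z < c := by
    intro i hi h
    have := hzi i hi
    rw [hKA i h] at this
    exact lt_of_le_of_ne this.2 (hzne i hi)
  have hzB : ∀ i ≤ k - 1, ¬ (i % 2 = 0 ∧ i < 2 * m - 1) → c < g^[i] z := by
    intro i hi h
    have := hzi i hi
    rw [hKB i h] at this
    exact lt_of_le_of_ne this.1 (hzne i hi).symm
  have hcri : ∀ i ≤ k - 1, cr g c z i = min i (2 * m - 1) := by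
    intro i
    induction i with
    | zero => intro _; simp [cr_zero]
    | succ i ih =>
      intro hi
      rw [cr_succ, ih (by omega)]
      by_cases h1 : i % 2 = 0 ∧ i < 2 * m - 1
      · have h2 := hzA i (by omega) h1
        have h3 := hzB (i+1) hi (by omega)
        rw [if_pos (mul_neg_of_neg_of_pos (by linarith) (by linarith))]
        omega
      · have h2 := hzB i (by omega) h1
        by_cases h4 : (i + 1) % 2 = 0 ∧ i + 1 < 2 * m - 1
        · have h3 := hzA (i+1) hi h4
          rw [if_pos (mul_neg_of_pos_of_neg (by linarith) (by linarith))]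
          omega
        · have h3 := hzB (i+1) hi h4
          rw [if_neg (not_lt.2 (mul_pos (by linarith) (by linarith)).le)]
          omega
  have hk1 : k - 1 + 1 = k := by omega
  have hzkk : g^[k] z = g t := by
    rw [← hk1, iterate_succ_apply', hzk]
  have hcrz : cr g c z k = 2 * m := by
    rw [← hk1, cr_succ, hcri _ le_rfl, hk1, hzk, hzkk,
      if_pos (mul_neg_of_pos_of_neg (by linarith) (by linarith))]
    omega
  have hTz : gmap g c k (2 * m) z = g t := by
    unfold gmap; rw [if_pos hcrz, hzkk]
  have hxe : ∀ i, g^[i + 1] x0 = e := by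
    intro i
    rw [iterate_succ_apply, hgx]; exact iterate_fixed hge i
  have hcrx : ∀ i, cr g c x0 (i + 1) = 1 := by
    intro i
    induction i with
    | zero =>
      rw [cr_succ, cr_zero, if_pos]
      simp only [iterate_zero, id, zero_add, iterate_one, hgx]
      exact mul_neg_of_neg_of_pos (by linarith) (by linarith)
    | succ i ih =>
      rw [cr_succ, ih, hxe, hxe, if_neg]
      exact not_lt.2 (mul_self_nonneg _)
  have hTx : gmap g c k (2 * m) x0 = c := by
    unfold gmap
    rw [if_neg]
    have := hcrx (k - 1)
    rw [hk1] at this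
    omega
  have hsub : uIcc x0 c ⊆ Icc a e := by rw [uIcc_of_le hxc.le]; exact hAJ
  obtain ⟨y, hy, h1, h2⟩ := horseshoe (gmap g c k (2 * m)) c x0 z
    ((gmap_continuousOn g _ hg hgm c hgc k _).mono hsub) hTx (gmap_c g c k _ hgc) hxc.ne
    (by rw [uIcc_of_le hxc.le]; exact hz)
    (by rw [hTz]; exact mem_uIcc.2 (Or.inl ⟨hgt, hxc.le⟩)) l hl
  exact ⟨y, hsub hy, h1, h2⟩

theorem final_aux (f : ℝ → ℝ) (a b : ℝ) (hf : ContinuousOn f (Icc a b))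
    (hmap : MapsTo f (Icc a b) (Icc a b)) (k m n l : ℕ) (hm : 0 < m) (hkm : 2 * m ≤ k)
    (hcop : Nat.Coprime m k) (hn : 0 < n) (hl : 0 < l) (hs : SharkLt l n)
    (x : ℝ) (hx : x ∈ Icc a b) (hper : minimalPeriod f x = k * n)
    (hov : overCount f x (k * n) = 2 * m * n) :
    ∃ y ∈ Icc a b, minimalPeriod f y = k * l ∧ overCount f y (k * l) = 2 * m * l := by
  have hkn : 2 ≤ k * n := by nlinarith
  have hkl : 2 ≤ k * l := by nlinarith
  have hpos : 0 < minimalPeriod f x := by omega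
  have hPJ := orb_mem_J f _ hmap x hx
  have hPm := orb_maps f x hpos
  have hPne := orb_ne f x (by omega)
  obtain ⟨u, hu, v, hv, c, huc, hcv, hc, hfu, hfv, hsep, hup⟩ := center_lemma f a b hf (orb f x)
    ⟨x, self_mem_orb f x hpos⟩ hPJ hPm hPne
  have hac : a ≤ c := (hPJ u hu).1.trans huc.le
  have hcb : c ≤ b := hcv.le.trans (hPJ v hv).2
  have hPc : ∀ p ∈ orb f x, p ≠ c := by
    rintro p hp rfl
    exact hPne p hp hc
  -- a cycle of the clipped map suffices
  suffices h : ∃ e, c ≤ e ∧ e ≤ b ∧ (f e = e ∨ ∀ z ∈ Icc a e, f z ≤ e) ∧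
      ∃ y ∈ Icc a e, y ≠ c ∧ minimalPeriod (gmap (clip f c e) c k (2 * m)) y = l by
    obtain ⟨e, hce, heb, hE, y, hy, hyc, hyl⟩ := h
    obtain ⟨h1, h2, h3⟩ := lift_cycle (clip f c e) c (clip_c f c e hc hce) k m l (by omega) hl hcop
      y hyc hyl
    obtain ⟨h4, h5⟩ := clip_result f a b c e hmap hac hce heb hE y hy h3 (k * l) _ hkl h1 h2
    exact ⟨y, ⟨hy.1, hy.2.trans heb⟩, h4, h5⟩
  by_cases hsp : ∀ p ∈ orb f x, c < p → f p < p
  · refine ⟨b, hcb, le_rfl, Or.inr (fun z hz => (hmap hz).2), ?_⟩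
    have hag : ∀ i, (clip f c b)^[i] x = f^[i] x := by
      apply agree_iter
      intro i
      have hp : f^[i] x ∈ orb f x := (mem_orb f x hpos _).2 ⟨i, rfl⟩
      rcases lt_or_gt_of_ne (hPc _ hp) with h | h
      · rw [clip_left _ _ _ _ h.le, max_eq_left (hup _ hp h).le,
          min_eq_left (hPJ _ (hPm _ hp)).2]
      · rw [clip_right _ _ _ _ h, min_eq_left (hsp _ hp h).le]
    refine main_aux (clip f c b) a b c (clip_continuousOn f a b c b hf hc hac hcb le_rfl)
      (clip_mapsTo f a b c b hmap hac hcb le_rfl) ⟨hac, hcb⟩ (clip_c f c b hc hcb) k m n l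
      (by omega) hn hl x hx (hPc x (self_mem_orb f x hpos)) ?_ ?_ hs
    · rw [agree_period f _ x hag, hper]
    · rw [← hov]
      symm
      apply agree_count f _ c x hag
      intro i
      have hp : f^[i] x ∈ orb f x := (mem_orb f x hpos _).2 ⟨i, rfl⟩
      rcases lt_or_gt_of_ne (hPc _ hp) with h | h
      · have := hup _ hp h
        exact mul_neg_of_pos_of_neg (by linarith) (by linarith)
      · have := hsp _ hp h
        exact mul_neg_of_neg_of_pos (by linarith) (by linarith)
  · push Not at hsp
    obtain ⟨p1, hp1, hp1c, hp1f⟩ := hsp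
    have hne1 : ((orb f x).filter (fun p => c < p ∧ p < f p)).Nonempty :=
      ⟨p1, Finset.mem_filter.2 ⟨hp1, hp1c, lt_of_le_of_ne hp1f (hPne p1 hp1).symm⟩⟩
    obtain ⟨z', hz', hzmin⟩ := Finset.exists_min_image _ id hne1
    obtain ⟨hzP, hzc, hzf⟩ := Finset.mem_filter.1 hz'
    have hdown : ∀ p ∈ orb f x, c < p → p < z' → f p < p := by
      intro p hp h1 h2
      by_contra h3
      have := hzmin p (Finset.mem_filter.2 ⟨hp, h1, lt_of_le_of_ne (not_lt.1 h3) (hPne p hp).symm⟩)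
      simp only [id] at this
      linarith
    have hvz : v < z' := by
      rcases hsep z' hzP with h | h
      · linarith
      · refine lt_of_le_of_ne h ?_
        rintro rfl; linarith
    have hne2 : ((orb f x).filter (fun p => p < z')).Nonempty :=
      ⟨v, Finset.mem_filter.2 ⟨hv, hvz⟩⟩
    obtain ⟨v', hv', hvmax⟩ := Finset.exists_max_image _ id hne2
    obtain ⟨hvP, hvz'⟩ := Finset.mem_filter.1 hv'
    have hvv : v ≤ v' := hvmax v (Finset.mem_filter.2 ⟨hv, hvz⟩)
    have hfv' := hdown v' hvP (by linarith) hvz'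
    have hsub : Icc v' z' ⊆ Icc a b := Icc_subset_Icc (hPJ v' hvP).1 (hPJ z' hzP).2
    have hco : ContinuousOn (fun y => f y - y) (Icc v' z') := (hf.mono hsub).sub continuousOn_id
    obtain ⟨e, hem, he⟩ := intermediate_value_Icc hvz'.le hco
      (show (0:ℝ) ∈ Icc (f v' - v') (f z' - z') from ⟨by linarith, by linarith⟩)
    simp only at he
    have he' : f e = e := by linarith
    have hPe : ∀ p ∈ orb f x, p ≠ e := by
      rintro p hp rfl
      exact hPne p hp he'
    have hve : v' < e := lt_of_le_of_ne hem.1 (hPe v' hvP)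
    have hez : e < z' := lt_of_le_of_ne hem.2 (hPe z' hzP).symm
    have hce : c < e := by linarith
    have heb : e ≤ b := hez.le.trans (hPJ z' hzP).2
    have hne3 : ((orb f x).filter (fun p => p < c ∧ e < f p)).Nonempty := by
      by_contra hcon
      rw [Finset.not_nonempty_iff_eq_empty, Finset.filter_eq_empty_iff] at hcon
      have := orb_inv f x hpos (fun p => p < e) u z' hu hzP (by linarith) (by
        intro p hp hpe
        rcases lt_or_gt_of_ne (hPc p hp) with h | h
        · have h1 : ¬ e < f p := fun h2 => hcon hp ⟨h, h2⟩
          exact lt_of_le_of_ne (not_lt.1 h1) (hPe _ (hPm p hp))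
        · exact (hdown p hp h (by linarith)).trans hpe)
      linarith
    obtain ⟨x0, hx0, hxmax⟩ := Finset.exists_max_image _ id hne3
    obtain ⟨hxP, hxc, hxe⟩ := Finset.mem_filter.1 hx0
    have ht : ∃ t ∈ orb f x, c < t ∧ t < e ∧ f t ≤ x0 := by
      by_contra hcon
      push Not at hcon
      have := orb_inv f x hpos (fun p => x0 < p ∧ p < e) v z' hv hzP
        ⟨by linarith, by linarith⟩ (by
        rintro p hp ⟨hp1, hp2⟩
        rcases lt_or_gt_of_ne (hPc p hp) with h | h
        · refine ⟨hp1.trans (hup p hp h), ?_⟩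
          have h1 : ¬ e < f p := by
            intro h2
            have := hxmax p (Finset.mem_filter.2 ⟨hp, h, h2⟩)
            simp only [id] at this
            linarith
          exact lt_of_le_of_ne (not_lt.1 h1) (hPe _ (hPm p hp))
        · exact ⟨hcon p hp h hp2, (hdown p hp h (by linarith)).trans hp2⟩)
      linarith [this.2]
    obtain ⟨t, htP, htc, hte, hft⟩ := ht
    refine ⟨e, hce.le, heb, Or.inl he', ?_⟩
    refine nonsep_horseshoe (clip f c e) a c e x0 t (clip_continuousOn f a b c e hf hc hac hce.le heb)
      (clip_mapsTo f a b c e hmap hac hce.le heb) (clip_c f c e hc hce.le) (clip_e f c e he')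
      (hPJ x0 hxP).1 hxc htc hte ?_ ?_ k m l hm hkm hl
    · rw [clip_left _ _ _ _ hxc.le, max_eq_left (by linarith), min_eq_right hxe.le]
    · rw [clip_right _ _ _ _ htc]
      exact (min_le_left _ _).trans hft

theorem orp_main (p q r s : ℕ) (hp : 0 < p) (hq : 0 < q) (hr : 0 < r) (hs : 0 < s)
    (hpq : 2 * p ≤ q) (hrs : 2 * r ≤ s)
    (heq : (p : ℚ) / q = (r : ℚ) / s) :
    (q / Nat.gcd p q) ∣ q ∧ (q / Nat.gcd p q) ∣ s ∧
      ((s / (q / Nat.gcd p q) = q / (q / Nat.gcd p q) ∨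
          SharkLt (s / (q / Nat.gcd p q)) (q / (q / Nat.gcd p q))) →
        OrpForces p q r s) := by
  have hps : p * s = r * q := by
    rw [div_eq_div_iff (by positivity) (by positivity)] at heq
    exact_mod_cast heq
  have hg : 0 < Nat.gcd p q := Nat.gcd_pos_of_pos_left _ hp
  have hcop : Nat.Coprime (p / Nat.gcd p q) (q / Nat.gcd p q) := Nat.coprime_div_gcd_div_gcd hg
  have hp' : p / Nat.gcd p q * Nat.gcd p q = p := Nat.div_mul_cancel (Nat.gcd_dvd_left _ _)
  have hq' : q / Nat.gcd p q * Nat.gcd p q = q := Nat.div_mul_cancel (Nat.gcd_dvd_right _ _)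
  generalize Nat.gcd p q = n at *
  generalize p / n = m at *
  generalize q / n = k at *
  subst hp' hq'
  have hm : 0 < m := Nat.pos_of_mul_pos_right hp
  have hk : 0 < k := Nat.pos_of_mul_pos_right hq
  have h1 : m * s = r * k := by
    apply Nat.eq_of_mul_eq_mul_right hg
    calc m * s * n = m * n * s := by ring
      _ = r * (k * n) := hps
      _ = r * k * n := by ring
  have hks : k ∣ s := hcop.symm.dvd_of_dvd_mul_left ⟨r, by rw [h1]; ring⟩
  refine ⟨Dvd.intro _ rfl, hks, ?_⟩
  obtain ⟨l, rfl⟩ := hks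
  have hl : 0 < l := Nat.pos_of_mul_pos_left hs
  have hr' : r = m * l := by
    apply Nat.eq_of_mul_eq_mul_right hk
    rw [← h1]; ring
  subst hr'
  rw [Nat.mul_div_cancel_left _ hk, Nat.mul_div_cancel_left _ hk]
  rintro (h | h)
  · subst h
    intro a b _ f _ _ hh
    exact hh
  · intro a b _ f hf hmap hh
    obtain ⟨x, hx, h2, h3⟩ := hh
    obtain ⟨y, hy, h4, h5⟩ := final_aux f a b hf hmap k m n l hm
      (by nlinarith) hcop hg hl h x hx h2 (by rw [h3]; ring)
    exact ⟨y, hy, h4, by rw [h5]; ring⟩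

end OrpHelpers

/-- If `p/q = r/s`, with `k` the denominator of the common value in lowest terms, then `k`
divides both `q` and `s`, and if `s/k` equals `q/k` or `s/k <ₛ q/k` in the Sharkovsky
ordering, then the over-rotation pair `(p, q)` forces the pair `(r, s)`. -/
theorem orpForces_of_eq (p q r s : ℕ) (hp : 0 < p) (hq : 0 < q) (hr : 0 < r) (hs : 0 < s)
    (hpq : 2 * p ≤ q) (hrs : 2 * r ≤ s)
    (heq : (p : ℚ) / q = (r : ℚ) / s) :
    (q / Nat.gcd p q) ∣ q ∧ (q / Nat.gcd p q) ∣ s ∧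
      ((s / (q / Nat.gcd p q) = q / (q / Nat.gcd p q) ∨
          SharkLt (s / (q / Nat.gcd p q)) (q / (q / Nat.gcd p q))) →
        OrpForces p q r s) := by
  exact orp_main p q r s hp hq hr hs hpq hrs heq
end

section
/- Let F : ℝ → ℝ be a continuous map with F(x + 1) = F(x) + 1 for all x (a lift of a continuous degree-1 circle map). Suppose there are points x_1, x_2 ∈ ℝ and positive integers q_1, q_2 and integers p_1, p_2 with F^{q_1}(x_1) = x_1 + p_1 and F^{q_2}(x_2) = x_2 + p_2. Then for every rational number r = a/b (a ∈ ℤ, b a positive integer) with p_1/q_1 ≤ r ≤ p_2/q_2 there exists a point x ∈ ℝ with F^b(x) = x + a. Consequently, the set of rotation numbers of all cycles of a continuous degree-1 circle map is either the intersection of ℚ with a closed interval, or a singleton, or empty. -/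
open Function

/-- The set of rotation numbers of all cycles of the degree-1 circle map with lift `G`. -/
def rotNumSet (G : ℝ → ℝ) : Set ℚ :=
  {ρ | ∃ (x : ℝ) (q : ℕ) (p : ℤ), 0 < q ∧ G^[q] x = x + p ∧ ρ = (p : ℚ) / q}

theorem iter_lift_int {F : ℝ → ℝ} (hlift : ∀ x, F (x + 1) = F x + 1) (q : ℕ) (p : ℤ) (x : ℝ) :
    F^[q] (x + p) = F^[q] x + p := by
  have h1 : Function.Semiconj (fun x : ℝ => x + 1) F F := fun x => (hlift x).symm
  have h0 : ∀ x, F^[q] (x + 1) = F^[q] x + 1 := fun x => ((h1.iterate_right q) x).symm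
  have hper : Function.Periodic (fun x => F^[q] x - x) 1 := fun x => by
    simp only [h0]; ring
  have := hper.int_mul p x
  simp only [mul_one] at this
  linarith

theorem iter_mul_point {F : ℝ → ℝ} (hlift : ∀ x, F (x + 1) = F x + 1) {q : ℕ} {p : ℤ} {x : ℝ}
    (h : F^[q] x = x + p) (b : ℕ) : F^[b * q] x = x + b * p := by
  induction b with
  | zero => simp
  | succ n ih =>
    rw [Nat.succ_mul, Function.iterate_add_apply, h, iter_lift_int hlift, ih]
    push_cast; ring

theorem rot_lower {F : ℝ → ℝ} (hlift : ∀ x, F (x + 1) = F x + 1) {b : ℕ} (hb : 0 < b) {t : ℝ}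
    (ht : ∀ x, x + t ≤ F^[b] x) : ∀ ρ ∈ rotNumSet F, t / b ≤ (ρ : ℝ) := by
  rintro ρ ⟨x, q, p, hq, h, rfl⟩
  have key : ∀ n : ℕ, x + n * t ≤ F^[b * n] x := by
    intro n
    induction n with
    | zero => simp
    | succ n ih =>
      rw [Nat.mul_succ, Nat.add_comm (b * n) b, Function.iterate_add_apply]
      have := ht (F^[b * n] x)
      push_cast; linarith
  have h1 := key q
  rw [iter_mul_point hlift h] at h1
  push_cast
  have : (0 : ℝ) < b := by exact_mod_cast hb
  have : (0 : ℝ) < q := by exact_mod_cast hq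
  rw [div_le_div_iff₀ (by assumption) (by assumption)]
  linarith

theorem rot_upper {F : ℝ → ℝ} (hlift : ∀ x, F (x + 1) = F x + 1) {b : ℕ} (hb : 0 < b) {t : ℝ}
    (ht : ∀ x, F^[b] x ≤ x + t) : ∀ ρ ∈ rotNumSet F, (ρ : ℝ) ≤ t / b := by
  rintro ρ ⟨x, q, p, hq, h, rfl⟩
  have key : ∀ n : ℕ, F^[b * n] x ≤ x + n * t := by
    intro n
    induction n with
    | zero => simp
    | succ n ih =>
      rw [Nat.mul_succ, Nat.add_comm (b * n) b, Function.iterate_add_apply]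
      have := ht (F^[b * n] x)
      push_cast; linarith
  have h1 := key q
  rw [iter_mul_point hlift h] at h1
  push_cast
  have : (0 : ℝ) < b := by exact_mod_cast hb
  have : (0 : ℝ) < q := by exact_mod_cast hq
  rw [div_le_div_iff₀ (by assumption) (by assumption)]
  linarith

theorem exists_extrema {F : ℝ → ℝ} (hF : Continuous F) (hlift : ∀ x, F (x + 1) = F x + 1) (b : ℕ) :
    ∃ m M : ℝ, ∀ x, F^[b] m - m ≤ F^[b] x - x ∧ F^[b] x - x ≤ F^[b] M - M := by
  have hc : Continuous (fun x => F^[b] x - x) := (hF.iterate b).sub continuous_id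
  have hper : Function.Periodic (fun x => F^[b] x - x) 1 := fun x => by
    have := iter_lift_int hlift b 1 x
    simp only [Int.cast_one] at this
    simp only [this]; ring
  obtain ⟨m, -, hm⟩ := isCompact_Icc.exists_isMinOn (Set.nonempty_Icc.2 (zero_le_one (α := ℝ)))
    hc.continuousOn
  obtain ⟨M, -, hM⟩ := isCompact_Icc.exists_isMaxOn (Set.nonempty_Icc.2 (zero_le_one (α := ℝ)))
    hc.continuousOn
  refine ⟨m, M, fun x => ?_⟩
  obtain ⟨y, hy, hxy⟩ := hper.exists_mem_Ico₀ one_pos x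
  have hy' := Set.Ico_subset_Icc_self hy
  have h1 := hm hy'
  have h2 := hM hy'
  simp only [Set.mem_ofPred_eq] at h1 h2 hxy
  rw [hxy]
  exact ⟨h1, h2⟩

/-- If `a/b` is not realized, all rotation numbers lie uniformly on one side of it. -/
theorem rot_gap {F : ℝ → ℝ} (hF : Continuous F) (hlift : ∀ x, F (x + 1) = F x + 1)
    (a : ℤ) {b : ℕ} (hb : 0 < b) (hno : ¬ ∃ x, F^[b] x = x + a) :
    ∃ s : ℝ, ((a : ℝ) / b < s ∧ ∀ ρ ∈ rotNumSet F, s ≤ (ρ : ℝ)) ∨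
      (s < (a : ℝ) / b ∧ ∀ ρ ∈ rotNumSet F, (ρ : ℝ) ≤ s) := by
  obtain ⟨m, M, hmM⟩ := exists_extrema hF hlift b
  have hb' : (0 : ℝ) < b := by exact_mod_cast hb
  have hc : Continuous (fun x => F^[b] x - x) := (hF.iterate b).sub continuous_id
  by_cases h1 : (a : ℝ) < F^[b] m - m
  · refine ⟨(F^[b] m - m) / b, Or.inl ⟨by gcongr, rot_lower hlift hb fun x => ?_⟩⟩
    linarith [(hmM x).1]
  by_cases h2 : F^[b] M - M < a
  · refine ⟨(F^[b] M - M) / b, Or.inr ⟨by gcongr, rot_upper hlift hb fun x => ?_⟩⟩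
    linarith [(hmM x).2]
  exfalso
  obtain ⟨x, hx⟩ := mem_range_of_exists_le_of_exists_ge hc ⟨m, not_lt.1 h1⟩ ⟨M, not_lt.1 h2⟩
  exact hno ⟨x, by simp only at hx; linarith⟩

/-- If a lift `F` of a degree-1 circle map has points with rotation numbers `p₁/q₁` and
`p₂/q₂`, then every rational `a/b` in between is also realized by a periodic orbit.
Consequently, the set of rotation numbers of all cycles of a continuous degree-1 circle
map is the intersection of `ℚ` with a closed interval, or a singleton, or empty. -/
theorem rotation_interval (F : ℝ → ℝ) (hF : Continuous F)
    (hlift : ∀ x, F (x + 1) = F x + 1)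
    (x₁ x₂ : ℝ) (q₁ q₂ : ℕ) (hq₁ : 0 < q₁) (hq₂ : 0 < q₂) (p₁ p₂ : ℤ)
    (h₁ : F^[q₁] x₁ = x₁ + p₁) (h₂ : F^[q₂] x₂ = x₂ + p₂) :
    (∀ (a : ℤ) (b : ℕ), 0 < b → (p₁ : ℚ) / q₁ ≤ (a : ℚ) / b → (a : ℚ) / b ≤ (p₂ : ℚ) / q₂ →
        ∃ x : ℝ, F^[b] x = x + a) ∧
    (∀ G : ℝ → ℝ, Continuous G → (∀ x, G (x + 1) = G x + 1) →
        (rotNumSet G = ∅ ∨ (∃ ρ₀ : ℚ, rotNumSet G = {ρ₀}) ∨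
          ∃ c d : ℝ, c ≤ d ∧ rotNumSet G = {ρ : ℚ | c ≤ (ρ : ℝ) ∧ (ρ : ℝ) ≤ d})) := by
  constructor
  · intro a b hb hl hr
    by_contra hno
    have hl' : (p₁ : ℝ) / q₁ ≤ (a : ℝ) / b := by exact_mod_cast hl
    have hr' : (a : ℝ) / b ≤ (p₂ : ℝ) / q₂ := by exact_mod_cast hr
    obtain ⟨s, ⟨hs, h⟩ | ⟨hs, h⟩⟩ := rot_gap hF hlift a hb hno
    · have := h _ ⟨x₁, q₁, p₁, hq₁, h₁, rfl⟩
      push_cast at this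
      linarith
    · have := h _ ⟨x₂, q₂, p₂, hq₂, h₂, rfl⟩
      push_cast at this
      linarith
  · intro G hG hGl
    rcases (rotNumSet G).eq_empty_or_nonempty with he | hne
    · exact Or.inl he
    right; right
    obtain ⟨m, M, hmM⟩ := exists_extrema hG hGl 1
    set S : Set ℝ := (fun ρ : ℚ => (ρ : ℝ)) '' rotNumSet G with hS
    have hSne : S.Nonempty := hne.image _
    have hbb : BddBelow S := ⟨(G^[1] m - m) / (1 : ℕ), by
      rintro _ ⟨ρ, hρ, rfl⟩
      exact rot_lower hGl one_pos (fun x => by linarith [(hmM x).1]) ρ hρ⟩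
    have hba : BddAbove S := ⟨(G^[1] M - M) / (1 : ℕ), by
      rintro _ ⟨ρ, hρ, rfl⟩
      exact rot_upper hGl one_pos (fun x => by linarith [(hmM x).2]) ρ hρ⟩
    refine ⟨sInf S, sSup S, csInf_le_csSup hSne hbb hba, ?_⟩
    ext ρ
    constructor
    · intro hρ
      exact ⟨csInf_le hbb ⟨ρ, hρ, rfl⟩, le_csSup hba ⟨ρ, hρ, rfl⟩⟩
    · rintro ⟨hc, hd⟩
      have hcast : (ρ : ℝ) = (ρ.num : ℝ) / (ρ.den : ℝ) := Rat.cast_def ρ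
      by_contra hno
      have hno' : ¬ ∃ x, G^[ρ.den] x = x + ρ.num := fun ⟨x, hx⟩ =>
        hno ⟨x, ρ.den, ρ.num, ρ.den_pos, hx, (Rat.num_div_den ρ).symm⟩
      obtain ⟨s, ⟨hs, h⟩ | ⟨hs, h⟩⟩ := rot_gap hG hGl ρ.num ρ.den_pos hno'
      · have : s ≤ sInf S := le_csInf hSne (by rintro _ ⟨ρ', hρ', rfl⟩; exact h ρ' hρ')
        linarith
      · have : sSup S ≤ s := csSup_le hSne (by rintro _ ⟨ρ', hρ', rfl⟩; exact h ρ' hρ')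
        linarith
end

section
/- Let F : ℝ → ℝ be a continuous map with F(x + 1) = F(x) + 1 for all x (a lift of a continuous degree-1 circle map f of ℝ/ℤ). Suppose there are points x_1, x_2 ∈ ℝ and positive integers q_1, q_2 and integers p_1, p_2 with F^{q_1}(x_1) = x_1 + p_1 and F^{q_2}(x_2) = x_2 + p_2. Then for every integer p and every positive integer q (the fraction p/q not necessarily in reduced form) with p_1/q_1 < p/q < p_2/q_2, there exists a point x ∈ ℝ with F^q(x) = x + p whose projection to the circle ℝ/ℤ is a periodic point of f of minimal period exactly q. In particular, every denominator of a fraction lying in the interior of the rotation interval is a period of a cycle of f. -/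
open Function

/-- Iterates of a degree-one lift commute with integer translations. -/
lemma iter_add_int (F : ℝ → ℝ) (h : ∀ x, F (x + 1) = F x + 1) (n : ℕ) (x : ℝ) (k : ℤ) :
    F^[n] (x + k) = F^[n] x + k := by
  have h1 : ∀ x, F^[n] (x + 1) = F^[n] x + 1 := by
    induction n with
    | zero => intro x; simp
    | succ n ih => intro x; rw [iterate_succ_apply, iterate_succ_apply, h, ih]
  induction k using Int.induction_on generalizing x with
  | zero => simp
  | succ i ih =>
    have := ih x
    push_cast at this ⊢
    rw [← add_assoc, h1, this]; ring
  | pred i ih =>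
    have := ih x
    have h2 := h1 (x + (-(i : ℝ) - 1))
    push_cast at this ⊢
    have e : x + (-(i : ℝ) - 1) + 1 = x + -(i : ℝ) := by ring
    rw [e, this] at h2
    linarith

lemma map_add_int' (F : ℝ → ℝ) (h : ∀ x, F (x + 1) = F x + 1) (x : ℝ) (k : ℤ) :
    F (x + k) = F x + k := iter_add_int F h 1 x k

/-- Repeating a displacement by an integer. -/
lemma iter_mul (F : ℝ → ℝ) (h : ∀ x, F (x + 1) = F x + 1) (n : ℕ) (x : ℝ) (k : ℤ)
    (hx : F^[n] x = x + k) (N : ℕ) : F^[n * N] x = x + N * k := by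
  induction N with
  | zero => simp
  | succ N ih =>
    rw [Nat.mul_succ, iterate_add_apply, hx, iter_add_int F h, ih]; push_cast; ring

/-- If some orbit drifts to the right, every level is crossed to the right. -/
lemma cross_right (G : ℝ → ℝ) (h : ∀ x, G (x + 1) = G x + 1) (y : ℝ) (b : ℕ) (t : ℤ)
    (ht : 0 < t) (hy : G^[b] y = y + t) (c : ℝ) : ∃ z ≤ c, c < G z := by
  by_contra! hc
  have hst : ∀ n : ℕ, ∀ z ≤ c, G^[n] z ≤ c := by
    intro n
    induction n with
    | zero => intro z hz; simpa using hz
    | succ n ih => intro z hz; rw [iterate_succ_apply]; exact ih _ (hc z hz)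
  obtain ⟨k, hk⟩ := exists_int_gt (y - c)
  obtain ⟨N, hN⟩ := exists_nat_gt (c - y + k)
  have h1 := hst (b * N) (y + ((-k : ℤ) : ℝ)) (by push_cast; linarith)
  rw [iter_add_int G h, iter_mul G h b y t hy] at h1
  push_cast at h1
  have h2 : (1 : ℝ) ≤ t := by exact_mod_cast ht
  have h3 : (N : ℝ) * 1 ≤ N * t := by gcongr
  linarith

/-- If some orbit drifts to the left, every level is crossed to the left. -/
lemma cross_left (G : ℝ → ℝ) (h : ∀ x, G (x + 1) = G x + 1) (y : ℝ) (b : ℕ) (t : ℤ)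
    (ht : t < 0) (hy : G^[b] y = y + t) (c : ℝ) : ∃ z, c ≤ z ∧ G z < c := by
  by_contra! hc
  have hst : ∀ n : ℕ, ∀ z, c ≤ z → c ≤ G^[n] z := by
    intro n
    induction n with
    | zero => intro z hz; simpa using hz
    | succ n ih => intro z hz; rw [iterate_succ_apply]; exact ih _ (hc z hz)
  obtain ⟨k, hk⟩ := exists_int_gt (c - y)
  obtain ⟨N, hN⟩ := exists_nat_gt (y + k - c)
  have h1 := hst (b * N) (y + (k : ℝ)) (by linarith)
  rw [iter_add_int G h, iter_mul G h b y t hy] at h1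
  have h2 : (t : ℝ) ≤ -1 := by exact_mod_cast (by omega : t ≤ -1)
  have h3 : (N : ℝ) * t ≤ N * (-1) := by gcongr
  linarith

/-- The horseshoe. -/
lemma exists_horseshoe (G : ℝ → ℝ) (hG : Continuous G) (h : ∀ x, G (x + 1) = G x + 1)
    (hr : ∀ c, ∃ z ≤ c, c < G z) (hl : ∀ c, ∃ z, c ≤ z ∧ G z < c) :
    ∃ t s b : ℝ, t < s ∧ s < b ∧ b ≤ G t ∧ G s < t ∧ b ≤ G b := by
  obtain ⟨s0, hs00, hs0⟩ := (isCompact_Icc (a := (0 : ℝ)) (b := 1)).exists_isMinOn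
    ⟨0, by simp⟩ hG.continuousOn
  have hs0' : ∀ x, s0 ≤ x → G s0 ≤ G x := by
    intro x hx
    have hf : G s0 ≤ G (Int.fract x) := hs0 (show Int.fract x ∈ Set.Icc (0 : ℝ) 1 from
        ⟨Int.fract_nonneg x, (Int.fract_lt_one x).le⟩)
    have h1 := map_add_int' G h (Int.fract x) ⌊x⌋
    rw [Int.fract_add_floor] at h1
    have h2 : (0 : ℝ) ≤ ⌊x⌋ := by
      exact_mod_cast Int.floor_nonneg.2 (hs00.1.trans hx)
    linarith
  obtain ⟨t, ht, htm⟩ := (isCompact_Icc (a := s0 - 1) (b := s0)).exists_isMaxOn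
    ⟨s0, by simp⟩ hG.continuousOn
  have htm' : ∀ x ≤ s0, G x ≤ G t := by
    intro x hx
    have hk1 := Int.floor_le (s0 - x)
    have hk2 := Int.lt_floor_add_one (s0 - x)
    have hk0 : (0 : ℝ) ≤ ⌊s0 - x⌋ := by
      exact_mod_cast Int.floor_nonneg.2 (by linarith : (0 : ℝ) ≤ s0 - x)
    have hf : G (x + ⌊s0 - x⌋) ≤ G t := htm (show x + ⌊s0 - x⌋ ∈ Set.Icc (s0 - 1) s0 from
      ⟨by linarith, by linarith⟩)
    rw [map_add_int' G h] at hf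
    linarith
  obtain ⟨s, hs, hsm⟩ := (isCompact_Icc (a := t) (b := s0)).exists_isMinOn
    ⟨s0, ht.2, le_rfl⟩ hG.continuousOn
  have hGt : s0 < G t := by
    obtain ⟨z, hz, hz'⟩ := hr s0
    exact hz'.trans_le (htm' z hz)
  have hGs : G s < t := by
    obtain ⟨z, hz, hz'⟩ := hl t
    refine lt_of_le_of_lt ?_ hz'
    by_cases hzs : z ≤ s0
    · exact hsm ⟨hz, hzs⟩
    · exact le_trans (hsm (show s0 ∈ Set.Icc t s0 from ⟨ht.2, le_rfl⟩)) (hs0' z (by linarith))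
  have hts : t < s := by
    rcases hs.1.lt_or_eq with h' | h'
    · exact h'
    · rw [← h'] at hGs; linarith [ht.2]
  obtain ⟨k, hk⟩ := exists_int_gt (s - t)
  have hkt := map_add_int' G h t k
  have hcomp : IsCompact {x | x ∈ Set.Icc s (t + k) ∧ x ≤ G x} :=
    isCompact_Icc.inter_right (isClosed_le continuous_id hG)
  obtain ⟨b, ⟨hb, hbG⟩, hbl⟩ := hcomp.exists_isLeast
    ⟨t + k, ⟨by linarith, le_rfl⟩, by rw [hkt]; linarith [ht.2]⟩
  have hbl' : ∀ x, s ≤ x → x < b → G x < x := by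
    intro x hx hxb
    by_contra! hc
    have := hbl (show x ∈ {x | x ∈ Set.Icc s (t + k) ∧ x ≤ G x} from
      ⟨⟨hx, by linarith [hb.2]⟩, hc⟩)
    linarith
  have hsb : s < b := by
    rcases hb.1.lt_or_eq with h' | h'
    · exact h'
    · rw [← h'] at hbG; linarith
  refine ⟨t, s, b, hts, hsb, ?_, hGs, hbG⟩
  by_contra! hc
  obtain ⟨y, hy, hy'⟩ := hr (G t)
  by_cases hys : y ≤ s
  · linarith [htm' y (hys.trans hs.2)]
  · linarith [hbl' y (by linarith) (by linarith)]

lemma exists_sub (f : ℝ → ℝ) (hf : Continuous f) (a b α β : ℝ) (hab : a ≤ b)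
    (hαβ : α ≤ β) (ha : f a ≤ α) (hb : β ≤ f b) :
    ∃ α' β', a ≤ α' ∧ α' ≤ β' ∧ β' ≤ b ∧ f α' = α ∧ f β' = β ∧
      ∀ x, α' ≤ x → x ≤ β' → α ≤ f x ∧ f x ≤ β := by
  obtain ⟨x0, hx0, hx0'⟩ := intermediate_value_Icc hab hf.continuousOn
    (show β ∈ Set.Icc (f a) (f b) from ⟨ha.trans hαβ, hb⟩)
  have hc1 : IsCompact {x | x ∈ Set.Icc a b ∧ f x = β} :=
    isCompact_Icc.inter_right (isClosed_eq hf continuous_const)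
  obtain ⟨β', ⟨hβ, hβe⟩, hβl⟩ := hc1.exists_isLeast ⟨x0, hx0, hx0'⟩
  obtain ⟨x1, hx1, hx1'⟩ := intermediate_value_Icc hβ.1 hf.continuousOn
    (show α ∈ Set.Icc (f a) (f β') from ⟨ha, by rw [hβe]; exact hαβ⟩)
  have hc2 : IsCompact {x | x ∈ Set.Icc a β' ∧ f x = α} :=
    isCompact_Icc.inter_right (isClosed_eq hf continuous_const)
  obtain ⟨α', ⟨hα, hαe⟩, hαl⟩ := hc2.exists_isGreatest ⟨x1, hx1, hx1'⟩
  refine ⟨α', β', hα.1, hα.2, hβ.2, hαe, hβe, fun x hx hx' => ⟨?_, ?_⟩⟩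
  · by_contra! hlt
    obtain ⟨w, hw, hwe⟩ := intermediate_value_Icc hx' hf.continuousOn
      (show α ∈ Set.Icc (f x) (f β') from ⟨hlt.le, by rw [hβe]; exact hαβ⟩)
    have := hαl ⟨⟨hα.1.trans (hx.trans hw.1), hw.2⟩, hwe⟩
    have hxe : x = α' := le_antisymm (hw.1.trans this) hx
    rw [hxe] at hlt; linarith
  · by_contra! hlt
    have hax := hα.1.trans hx
    obtain ⟨w, hw, hwe⟩ := intermediate_value_Icc hax hf.continuousOn
      (show β ∈ Set.Icc (f a) (f x) from ⟨ha.trans hαβ, hlt.le⟩)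
    have := hβl ⟨⟨hw.1, hw.2.trans (hx'.trans hβ.2)⟩, hwe⟩
    have hxe : x = β' := le_antisymm hx' (this.trans hw.2)
    rw [hxe] at hlt; linarith

/-- A horseshoe has periodic points of all periods. -/
lemma horseshoe_periods (G : ℝ → ℝ) (hG : Continuous G) (t s b : ℝ) (hts : t < s)
    (hsb : s < b) (hGt : b ≤ G t) (hGs : G s < t) (hGb : b ≤ G b) (d : ℕ) (hd : 0 < d) :
    ∃ x, G^[d] x = x ∧ ∀ l, 0 < l → l < d → G^[l] x ≠ x := by
  have key : ∀ n : ℕ, ∃ α β, t ≤ α ∧ α ≤ β ∧ β ≤ b ∧ G^[n] α = t ∧ G^[n] β = b ∧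
      ∀ x, α ≤ x → x ≤ β → ∀ i < n, s ≤ G^[i] x := by
    intro n
    induction n with
    | zero => exact ⟨t, b, le_rfl, by linarith, le_rfl, rfl, rfl, by simp⟩
    | succ n ih =>
      obtain ⟨α, β, h1, h2, h3, h4, h5, h6⟩ := ih
      obtain ⟨α', β', g1, g2, g3, g4, g5, g6⟩ := exists_sub G hG s b α β hsb.le h2
        (by linarith) (by linarith)
      refine ⟨α', β', by linarith, g2, g3, by rw [iterate_succ_apply, g4, h4],
        by rw [iterate_succ_apply, g5, h5], ?_⟩
      intro x hx hx' i hi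
      cases i with
      | zero => exact g1.trans hx
      | succ i =>
        rw [iterate_succ_apply]
        exact h6 _ (g6 x hx hx').1 (g6 x hx hx').2 i (by omega)
  obtain ⟨d, rfl⟩ : ∃ e, d = e + 1 := ⟨d - 1, by omega⟩
  obtain ⟨α, β, h1, h2, h3, h4, h5, h6⟩ := key d
  obtain ⟨α', β', g1, g2, g3, g4, g5, g6⟩ := exists_sub (fun x => -G x) hG.neg t s (-β) (-α)
    hts.le (by linarith) (by linarith) (by linarith)
  simp only [neg_inj] at g4 g5
  have hcont : Continuous (fun x => x - G^[d + 1] x) := continuous_id.sub (hG.iterate (d + 1))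
  obtain ⟨x, hx, hxe⟩ := intermediate_value_Icc g2 hcont.continuousOn
    (show (0 : ℝ) ∈ Set.Icc _ _ from
      ⟨by simp only [iterate_succ_apply, g4, h5]; linarith,
       by simp only [iterate_succ_apply, g5, h4]; linarith⟩)
  refine ⟨x, by simp only at hxe; linarith, ?_⟩
  intro l hl hld hlx
  have hg := g6 x hx.1 hx.2
  have hin := h6 (G x) (by linarith) (by linarith)
  obtain ⟨l, rfl⟩ : ∃ e, l = e + 1 := ⟨l - 1, by omega⟩
  have hxs : s ≤ x := by
    have := hin l (by omega)
    rwa [← iterate_succ_apply, hlx] at this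
  have hxs' : x = s := le_antisymm (hx.2.trans g3) hxs
  have h0 := hin 0 (by omega)
  simp only [iterate_zero, id_eq, hxs'] at h0
  linarith

/-- If a lift `F` of a continuous degree-1 circle map `f` has points with rotation
numbers `p₁/q₁` and `p₂/q₂`, then for every fraction `p/q` (not necessarily reduced)
strictly in between, there is a point `x` with `F^[q] x = x + p` projecting to a periodic
point of `f` of minimal period exactly `q`. -/
theorem rotation_interval_interior_periods (F : ℝ → ℝ) (hF : Continuous F)
    (hlift : ∀ x, F (x + 1) = F x + 1)
    (x₁ x₂ : ℝ) (q₁ q₂ : ℕ) (hq₁ : 0 < q₁) (hq₂ : 0 < q₂) (p₁ p₂ : ℤ)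
    (h₁ : F^[q₁] x₁ = x₁ + p₁) (h₂ : F^[q₂] x₂ = x₂ + p₂) :
    ∀ (p : ℤ) (q : ℕ), 0 < q → (p₁ : ℚ) / q₁ < (p : ℚ) / q → (p : ℚ) / q < (p₂ : ℚ) / q₂ →
      ∃ x : ℝ, F^[q] x = x + p ∧
        ∀ j : ℕ, 0 < j → j < q → ∀ m : ℤ, F^[j] x ≠ x + m := by
  intro p q hq hlo hhi
  have hqQ : (0 : ℚ) < q := by exact_mod_cast hq
  have hq₁Q : (0 : ℚ) < q₁ := by exact_mod_cast hq₁
  have hq₂Q : (0 : ℚ) < q₂ := by exact_mod_cast hq₂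
  rw [div_lt_div_iff₀ hq₁Q hqQ] at hlo
  rw [div_lt_div_iff₀ hqQ hq₂Q] at hhi
  have hlo' : p₁ * q < p * q₁ := by exact_mod_cast hlo
  have hhi' : p * q₂ < p₂ * q := by exact_mod_cast hhi
  obtain ⟨g, m, n, hg, hcop, hp, hqn⟩ : ∃ (g : ℕ) (m : ℤ) (n : ℕ), 0 < g ∧
      IsCoprime (n : ℤ) m ∧ p = g * m ∧ q = g * n := by
    have hg : 0 < Int.gcd p q := Int.gcd_pos_of_ne_zero_right _ (by omega)
    obtain ⟨m, hm⟩ := Int.gcd_dvd_left p q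
    obtain ⟨n, hn⟩ : Int.gcd p q ∣ q := by
      exact_mod_cast Int.gcd_dvd_right p q
    refine ⟨Int.gcd p q, m, n, hg, ?_, hm, hn⟩
    have hbez := Int.gcd_eq_gcd_ab p q
    refine ⟨Int.gcdB p q, Int.gcdA p q, ?_⟩
    have hgz : ((Int.gcd p q : ℕ) : ℤ) ≠ 0 := by exact_mod_cast hg.ne'
    have hn' : (q : ℤ) = (Int.gcd p q : ℤ) * n := by exact_mod_cast hn
    apply mul_left_cancel₀ hgz
    generalize Int.gcdA p q = A at *
    generalize Int.gcdB p q = B at *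
    generalize ((Int.gcd p q : ℕ) : ℤ) = D at *
    rw [hm, hn'] at hbez
    linear_combination -hbez
  have hgz : (0 : ℤ) < g := by exact_mod_cast hg
  have hn : 0 < n := by
    rcases Nat.eq_zero_or_pos n with h | h
    · subst h; simp at hqn; omega
    · exact h
  have hlo2 : p₁ * n < m * q₁ := by
    rw [hp, hqn] at hlo'
    push_cast at hlo'
    exact lt_of_mul_lt_mul_left (by linarith : (g : ℤ) * (p₁ * n) < g * (m * q₁)) hgz.le
  have hhi2 : m * q₂ < p₂ * n := by
    rw [hp, hqn] at hhi'
    push_cast at hhi'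
    exact lt_of_mul_lt_mul_left (by linarith : (g : ℤ) * (m * q₂) < g * (p₂ * n)) hgz.le
  set G : ℝ → ℝ := fun x => F^[n] x - m with hGdef
  have hGc : Continuous G := (hF.iterate n).sub continuous_const
  have hGl : ∀ x, G (x + 1) = G x + 1 := by
    intro x
    have := iter_add_int F hlift n x 1
    simp only [hGdef]
    push_cast at this
    rw [this]; ring
  have hGi : ∀ (k : ℕ) (x : ℝ), G^[k] x = F^[n * k] x - k * m := by
    intro k
    induction k with
    | zero => intro x; simp
    | succ k ih =>
      intro x
      have h3 := iter_add_int F hlift n (F^[n * k] x) (-(k * m))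
      push_cast at h3
      rw [iterate_succ_apply', ih, Nat.mul_succ, Nat.add_comm, iterate_add_apply]
      simp only [hGdef, sub_eq_add_neg]
      rw [h3]; push_cast; ring
  have e1 : G^[q₁] x₁ = x₁ + ((p₁ * n - m * q₁ : ℤ) : ℝ) := by
    rw [hGi, mul_comm, iter_mul F hlift q₁ x₁ p₁ h₁]; push_cast; ring
  have e2 : G^[q₂] x₂ = x₂ + ((p₂ * n - m * q₂ : ℤ) : ℝ) := by
    rw [hGi, mul_comm, iter_mul F hlift q₂ x₂ p₂ h₂]; push_cast; ring
  obtain ⟨t, s, b, a1, a2, a3, a4, a5⟩ := exists_horseshoe G hGc hGl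
    (cross_right G hGl x₂ q₂ _ (by linarith) e2) (cross_left G hGl x₁ q₁ _ (by linarith) e1)
  obtain ⟨x, hx, hmin⟩ := horseshoe_periods G hGc t s b a1 a2 a3 a4 a5 g hg
  refine ⟨x, ?_, ?_⟩
  · rw [hGi] at hx
    rw [hqn, hp, mul_comm]; push_cast; linarith
  · intro j hj hjq k hk
    have f1 : G^[j] x = x + ((n * k - j * m : ℤ) : ℝ) := by
      rw [hGi, mul_comm, iter_mul F hlift j x k hk]; push_cast; ring
    have f2 := iter_mul G hGl j x _ f1 g
    have f3 := iter_mul G hGl g x 0 (by simpa using hx) j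
    rw [mul_comm, f2] at f3
    have f4 : (g : ℤ) * (n * k - j * m) = 0 := by
      have : (g : ℝ) * ((n * k - j * m : ℤ) : ℝ) = 0 := by simpa using f3
      exact_mod_cast this
    have f5 : (n : ℤ) * k - j * m = 0 := (mul_eq_zero.1 f4).resolve_left hgz.ne'
    obtain ⟨l, hl⟩ : n ∣ j := by
      have : (n : ℤ) ∣ j := hcop.dvd_of_dvd_mul_right ⟨k, by linarith⟩
      exact_mod_cast this
    have hl0 : 0 < l := by
      rcases Nat.eq_zero_or_pos l with h | h
      · subst h; simp at hl; omega
      · exact h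
    have hlg : l < g := by
      rw [hl, hqn, mul_comm g n] at hjq
      exact lt_of_mul_lt_mul_left hjq (Nat.zero_le n)
    apply hmin l hl0 hlg
    rw [hGi, ← hl, hk]
    have f6 : k = l * m := by
      have hnz : (n : ℤ) ≠ 0 := by exact_mod_cast hn.ne'
      apply mul_left_cancel₀ hnz
      rw [hl] at f5; push_cast at f5; linarith
    rw [f6]; push_cast; ring
end
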